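/- Assume the (NA) condition together with: (A1) E U⁺(·, V_T^{1,φ}) < ∞ for all φ ∈ Φ(U,1); (A2) Φ(U,1) = Φ(1); (A3) asymptotic elasticity: there exist γ̄ ≥ 0, K > 0 and ℱ-measurable C : Ω → [0,∞) with E C < ∞ such that U(ω, λx) ≤ K λ^{γ̄}( U(ω, x + 1/2) + C(ω) ) for all ω ∈ Ω, λ ≥ 1, x ∈ ℝ. Then for every x ≥ 0 the value u(x) := sup_{φ ∈ Φ(U,x)} E U(·, V_T^{x,φ}) is finite, and there exists an optimal strategy φ* ∈ Φ(U,x) with u(x) = E U(·, V_T^{x,φ*}); moreover φ*_t(·) ∈ D^t(·) almost surely for all 1 ≤ t ≤ T. -/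

import Mathlib

/-!
The theorem is an instance of a closedness property of the set of attainable conditional values,
`ClosedAt`, proved by backward induction on time for every random payoff `F` that is measurable,
nondecreasing, upper semicontinuous and has integrable positive part at all multiples of the
terminal wealth of strategies with initial capital `1` (`Payoff`). It says: given capitals `ξ k` at
time `t` converging almost surely to `ξ'` and admissible continuations `φ k`, there is one admissible
continuation from `ξ'`, with portfolios in `D`, whose conditional value (`Jv`) dominates the limsup
of the conditional values of the `φ k` from `ξ k`. Applied at time `0` with constant capital `x` to a
maximizing sequence, this yields the optimizer (`Payoff.exists_optimal`).

At the final time the property is upper semicontinuity together with monotonicity. The induction step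
(`closedAt_succ`) combines the following facts.

* The part of a portfolio that is almost surely orthogonal to the price increment can be removed
  measurably (`exists_measurable_regression`, the measurable limit of a Landweber iteration for a
  weighted least-squares problem). Under (NA), what remains lies in `D` (`ae_mem_Dset`).
* Under (NA) the remaining portfolios are almost surely bounded when the capitals are: a limit of
  normalised unbounded portfolios would be an arbitrage (`ae_bounded_strategies`). Hence a measurable
  random subsequence converges, along which the values tend to their limsup
  (`exists_measurable_subseq`), and strategies can be pasted along random indices.
* The limsup is interchanged with the one-step integral by reverse Fatou (`limsup_geint_le`). The
  integrable majorant (`ae_exists_dominating`) comes from finite dimensionality: the wealths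
  `ξ j + ⟪g j, ΔS⟫` after one step are bounded by a fixed multiple of the sum of finitely many of them
  (`exists_dominating_index`), and the induction hypothesis applied to the positive part of `F`
  replaces the infinitely many continuations by a single one (`exists_dominating_continuation`).

Asymptotic elasticity is used only in `payoff_utility`, where it transfers integrability from initial
capital `1` to all multiples of the terminal wealth: `V / 2 + 1 / 2` is attainable from capital `1`
whenever `V` is.
-/

open MeasureTheory ProbabilityTheory Set
open scoped ENNReal InnerProductSpace

noncomputable section

/-- `d`-dimensional Euclidean space `ℝ^d`. -/
abbrev Evec (d : ℕ) : Type := EuclideanSpace ℝ (Fin d)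

/-- The history space `Ω^t = Ω_1 × ⋯ × Ω_t` (with `Ω^0` a one-point space). -/
def Hist (Ωs : ℕ → Type) : ℕ → Type
  | 0 => PUnit
  | t + 1 => Hist Ωs t × Ωs (t + 1)

/-- The product σ-algebra `ℱ_t = 𝒢_1 ⊗ ⋯ ⊗ 𝒢_t` on `Ω^t`. -/
instance histMS (Ωs : ℕ → Type) [m : ∀ t, MeasurableSpace (Ωs t)] :
    ∀ t, MeasurableSpace (Hist Ωs t)
  | 0 => inferInstanceAs (MeasurableSpace PUnit)
  | t + 1 => @Prod.instMeasurableSpace _ _ (histMS Ωs t) (m (t + 1))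

variable {Ωs : ℕ → Type} [∀ t, MeasurableSpace (Ωs t)] {d : ℕ}

/-- The measures `P_t` on `Ω^t` obtained by iterated integration of the kernels
`q_{s+1}` (here `q 0` applied to the unique point of `Ω^0` plays the role of `P_1`). -/
def Pmes (q : ∀ t, Kernel (Hist Ωs t) (Ωs (t + 1))) : ∀ t, Measure (Hist Ωs t)
  | 0 => Measure.dirac PUnit.unit
  | t + 1 => (Pmes q t).bind (fun ω => ((q t) ω).map (fun y => ((ω, y) : Hist Ωs (t + 1))))

/-- The positive part of an extended real, as an element of `[0,∞]`. -/
def ePos (x : EReal) : ℝ≥0∞ := if x = ⊤ then ⊤ else ENNReal.ofReal x.toReal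

/-- The generalised integral `∫ f dμ := ∫ f⁺ dμ − ∫ f⁻ dμ` of an extended-real valued
function, with values in `ℝ ∪ {±∞}`. -/
def geint {α : Type*} [MeasurableSpace α] (μ : Measure α) (f : α → EReal) : EReal :=
  ((∫⁻ a, ePos (f a) ∂μ : ℝ≥0∞) : EReal) - ((∫⁻ a, ePos (-f a) ∂μ : ℝ≥0∞) : EReal)

/-- The price increment `ΔS_{t+1}(ω^t, ω_{t+1}) = S_{t+1}(ω^t,ω_{t+1}) − S_t(ω^t)`. -/
def deltaS (S : ∀ t, Hist Ωs t → Evec d) (t : ℕ) (ω : Hist Ωs t) (y : Ωs (t + 1)) : Evec d :=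
  S (t + 1) ((ω, y) : Hist Ωs (t + 1)) - S t ω

/-- The wealth process `V_t^{x,φ} = x + Σ_{s=1}^t φ_s · ΔS_s` (here `φ t` is the paper's
`φ_{t+1}`, the holding over the period `(t, t+1]`). -/
def Vval (S : ∀ t, Hist Ωs t → Evec d) (φ : ∀ t, Hist Ωs t → Evec d) (x : ℝ) :
    ∀ t, Hist Ωs t → ℝ
  | 0 => fun _ => x
  | t + 1 => fun ω => Vval S φ x t ω.1 + ⟪φ t ω.1, deltaS S t ω.1 ω.2⟫_ℝ

/-- The no-arbitrage condition (NA): if `V_T^{0,φ} ≥ 0` `P`-a.s. for a (predictable)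
strategy `φ`, then `V_T^{0,φ} = 0` `P`-a.s. -/
def NAcond (q : ∀ t, Kernel (Hist Ωs t) (Ωs (t + 1))) (S : ∀ t, Hist Ωs t → Evec d)
    (T : ℕ) : Prop :=
  ∀ φ : ∀ t, Hist Ωs t → Evec d, (∀ t, Measurable (φ t)) →
    (∀ᵐ ω ∂(Pmes q T), 0 ≤ Vval S φ 0 T ω) → (∀ᵐ ω ∂(Pmes q T), Vval S φ 0 T ω = 0)

/-- `D̃^{t+1}(ω^t)`: the support of the law of `ΔS_{t+1}(ω^t, ·)` under `q_{t+1}(·|ω^t)`,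
i.e. the intersection of all closed sets carrying full conditional measure. -/
def suppK (q : ∀ t, Kernel (Hist Ωs t) (Ωs (t + 1))) (S : ∀ t, Hist Ωs t → Evec d)
    (t : ℕ) (ω : Hist Ωs t) : Set (Evec d) :=
  ⋂₀ {A : Set (Evec d) | IsClosed A ∧ (q t) ω {y | deltaS S t ω y ∈ A} = 1}

/-- `D^{t+1}(ω^t)`: the affine hull of the support `D̃^{t+1}(ω^t)`. -/
def Dset (q : ∀ t, Kernel (Hist Ωs t) (Ωs (t + 1))) (S : ∀ t, Hist Ωs t → Evec d)
    (t : ℕ) (ω : Hist Ωs t) : Set (Evec d) :=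
  (affineSpan ℝ (suppK q S t ω) : Set (Evec d))

/-- `Φ(x)`: predictable strategies with `V_T^{x,φ} ≥ 0` `P`-a.s. -/
def PhiX (q : ∀ t, Kernel (Hist Ωs t) (Ωs (t + 1))) (S : ∀ t, Hist Ωs t → Evec d)
    (T : ℕ) (x : ℝ) : Set (∀ t, Hist Ωs t → Evec d) :=
  {φ | (∀ t, Measurable (φ t)) ∧ ∀ᵐ ω ∂(Pmes q T), 0 ≤ Vval S φ x T ω}

/-- `Φ(U,x)`: strategies in `Φ(x)` for which `E U(·, V_T^{x,φ})` exists in the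
generalised sense, i.e. `E U⁺ < ∞` or `E U⁻ < ∞`. -/
def PhiU (q : ∀ t, Kernel (Hist Ωs t) (Ωs (t + 1))) (S : ∀ t, Hist Ωs t → Evec d)
    (T : ℕ) (U : Hist Ωs T → ℝ → EReal) (x : ℝ) : Set (∀ t, Hist Ωs t → Evec d) :=
  {φ ∈ PhiX q S T x |
    (∫⁻ ω, ePos (U ω (Vval S φ x T ω)) ∂(Pmes q T) < ⊤) ∨
    (∫⁻ ω, ePos (-(U ω (Vval S φ x T ω))) ∂(Pmes q T) < ⊤)}

/-- The value function `u(x) = sup_{φ ∈ Φ(U,x)} E U(·, V_T^{x,φ})`. -/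
def uval (q : ∀ t, Kernel (Hist Ωs t) (Ωs (t + 1))) (S : ∀ t, Hist Ωs t → Evec d)
    (T : ℕ) (U : Hist Ωs T → ℝ → EReal) (x : ℝ) : EReal :=
  ⨆ φ ∈ PhiU q S T U x, geint (Pmes q T) (fun ω => U ω (Vval S φ x T ω))

section Proof

open Filter Topology

/-! ### Generalised integral -/

lemma ePos_eq (x : EReal) : ePos x = x.toENNReal := rfl

lemma ePos_mono : Monotone ePos := fun _ _ h => EReal.toENNReal_le_toENNReal h

lemma measurable_ePos : Measurable ePos := measurable_ereal_toENNReal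

lemma ePos_coe (x : ℝ≥0∞) : ePos (x : EReal) = x := EReal.toENNReal_coe

lemma ePos_max_zero (x : EReal) : ePos (max x 0) = ePos x := by
  rcases le_total x 0 with h | h
  · rw [max_eq_right h, ePos_eq, ePos_eq, EReal.toENNReal_of_nonpos h, EReal.toENNReal_zero]
  · rw [max_eq_left h]

lemma ePos_sub_ePos_neg (x : EReal) : ((ePos x : ℝ≥0∞) : EReal) - (ePos (-x) : ℝ≥0∞) = x := by
  rcases le_total x 0 with h | h
  · rw [ePos_eq, ePos_eq, EReal.toENNReal_of_nonpos h, EReal.coe_toENNReal (by simpa using h)]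
    simp
  · rw [ePos_eq, ePos_eq, EReal.coe_toENNReal h, EReal.toENNReal_of_nonpos (by simpa using h)]
    simp

section geint
variable {α : Type*} [MeasurableSpace α] {μ : Measure α}

lemma geint_mono_ae {f g : α → EReal} (h : ∀ᵐ a ∂μ, f a ≤ g a) : geint μ f ≤ geint μ g := by
  unfold geint
  apply EReal.sub_le_sub
  · rw [EReal.coe_ennreal_le_coe_ennreal_iff]
    exact lintegral_mono_ae (h.mono fun a ha => ePos_mono ha)
  · rw [EReal.coe_ennreal_le_coe_ennreal_iff]
    exact lintegral_mono_ae (h.mono fun a ha => ePos_mono (EReal.neg_le_neg_iff.2 ha))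

lemma geint_congr_ae {f g : α → EReal} (h : ∀ᵐ a ∂μ, f a = g a) : geint μ f = geint μ g :=
  le_antisymm (geint_mono_ae (h.mono fun _ ha => ha.le)) (geint_mono_ae (h.mono fun _ ha => ha.ge))

lemma geint_coe (f : α → ℝ≥0∞) : geint μ (fun a => (f a : EReal)) = (∫⁻ a, f a ∂μ : ℝ≥0∞) := by
  have h : ∀ a, ePos (-(f a : EReal)) = 0 := fun a =>
    EReal.toENNReal_of_nonpos (by
      simpa using EReal.coe_ennreal_nonneg (f a))
  simp [geint, h, ePos_coe]

lemma ePos_geint_le (f : α → EReal) : ePos (geint μ f) ≤ ∫⁻ a, ePos (f a) ∂μ := by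
  calc ePos (geint μ f) ≤ ePos ((∫⁻ a, ePos (f a) ∂μ : ℝ≥0∞) : EReal) := by
        apply ePos_mono
        unfold geint
        apply EReal.sub_le_of_le_add'
        exact le_add_of_nonneg_left (by positivity)
    _ = _ := ePos_coe _

/-- Reverse Fatou for the generalised integral. -/
lemma limsup_geint_le {X : ℕ → α → EReal} (hX : ∀ j, Measurable (X j)) (Y : α → ℝ≥0∞)
    (hXY : ∀ j, ∀ᵐ a ∂μ, ePos (X j a) ≤ Y a) (hY : ∫⁻ a, Y a ∂μ < ⊤) :
    limsup (fun j => geint μ (X j)) atTop ≤ geint μ (fun a => limsup (fun j => X j a) atTop) := by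
  have hpos : limsup (fun j => ∫⁻ a, ePos (X j a) ∂μ) atTop
      ≤ ∫⁻ a, ePos (limsup (fun j => X j a) atTop) ∂μ := by
    refine (limsup_lintegral_le Y (fun j => measurable_ePos.comp (hX j)) hXY hY.ne).trans ?_
    refine lintegral_mono fun a => le_of_eq ?_
    exact (ePos_mono.map_limsup_of_continuousAt (a := fun j => X j a) (F := atTop)
      EReal.continuous_toENNReal.continuousAt).symm
  have hneg : ∫⁻ a, ePos (-limsup (fun j => X j a) atTop) ∂μ
      ≤ liminf (fun j => ∫⁻ a, ePos (-X j a) ∂μ) atTop := by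
    refine le_trans (lintegral_mono fun a => le_of_eq ?_)
      (lintegral_liminf_le fun j => measurable_ePos.comp (hX j).neg)
    have : -limsup (fun j => X j a) atTop = liminf (fun j => -X j a) atTop :=
      (EReal.liminf_neg (v := fun j => X j a)).symm
    rw [this]
    exact ePos_mono.map_liminf_of_continuousAt (a := fun j => -X j a) (F := atTop)
      EReal.continuous_toENNReal.continuousAt
  have hcoe : Monotone (fun x : ℝ≥0∞ => (x : EReal)) := fun _ _ h =>
    EReal.coe_ennreal_le_coe_ennreal_iff.2 h
  have h1 : limsup (fun j => ((∫⁻ a, ePos (X j a) ∂μ : ℝ≥0∞) : EReal)) atTop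
      ≤ (∫⁻ a, ePos (limsup (fun j => X j a) atTop) ∂μ : ℝ≥0∞) := by
    refine le_trans (le_of_eq ?_) (hcoe hpos)
    exact (hcoe.map_limsup_of_continuousAt (a := fun j => ∫⁻ a, ePos (X j a) ∂μ) (F := atTop)
      continuous_coe_ennreal_ereal.continuousAt).symm
  have h2 : limsup (fun j => -((∫⁻ a, ePos (-X j a) ∂μ : ℝ≥0∞) : EReal)) atTop
      ≤ -((∫⁻ a, ePos (-limsup (fun j => X j a) atTop) ∂μ : ℝ≥0∞) : EReal) := by
    have e : limsup (fun j => -((∫⁻ a, ePos (-X j a) ∂μ : ℝ≥0∞) : EReal)) atTop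
      = -liminf (fun j => ((∫⁻ a, ePos (-X j a) ∂μ : ℝ≥0∞) : EReal)) atTop :=
      EReal.limsup_neg (v := fun j => ((∫⁻ a, ePos (-X j a) ∂μ : ℝ≥0∞) : EReal))
    rw [e, EReal.neg_le_neg_iff]
    refine le_trans (hcoe hneg) (le_of_eq ?_)
    exact hcoe.map_liminf_of_continuousAt (a := fun j => ∫⁻ a, ePos (-X j a) ∂μ) (F := atTop)
      continuous_coe_ennreal_ereal.continuousAt
  -- the limsup of the positive parts is finite and nonnegative, so no `∞ - ∞` occurs
  have hlt : limsup (fun j => ((∫⁻ a, ePos (X j a) ∂μ : ℝ≥0∞) : EReal)) atTop ≤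
      ((∫⁻ a, Y a ∂μ : ℝ≥0∞) : EReal) := by
    refine limsup_le_of_le (by isBoundedDefault) (Eventually.of_forall fun j => ?_)
    exact hcoe (lintegral_mono_ae (hXY j))
  have hge : (0 : EReal) ≤ limsup (fun j => ((∫⁻ a, ePos (X j a) ∂μ : ℝ≥0∞) : EReal)) atTop := by
    refine le_limsup_of_frequently_le' (Frequently.of_forall fun j => ?_)
    positivity
  have hne : limsup (fun j => ((∫⁻ a, ePos (X j a) ∂μ : ℝ≥0∞) : EReal)) atTop ≠ ⊤ := by
    intro h
    rw [h] at hlt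
    have := top_le_iff.1 hlt
    rw [EReal.coe_ennreal_eq_top_iff] at this
    exact hY.ne this
  have hnb : limsup (fun j => ((∫⁻ a, ePos (X j a) ∂μ : ℝ≥0∞) : EReal)) atTop ≠ ⊥ := by
    intro h
    rw [h] at hge
    simp at hge
  exact (EReal.limsup_add_le (Or.inl hnb) (Or.inl hne)).trans (add_le_add h1 h2)

/-- Positive and negative part of a difference `a - b` with `a` finite are truncated differences. -/
lemma toENNReal_coe_sub_coe {a b : ℝ≥0∞} (ha : a ≠ ⊤) :
    ePos ((a : EReal) - b) = a - b ∧ ePos (-((a : EReal) - b)) = b - a := by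
  lift a to NNReal using ha
  induction b using ENNReal.recTopCoe with
  | top =>
    constructor
    · simp [ePos_eq]
    · simp [ePos_eq]
  | coe b =>
    have e : ((a : ℝ≥0∞) : EReal) - ((b : ℝ≥0∞) : EReal) = (((a : ℝ) - b : ℝ) : EReal) := rfl
    constructor
    · rw [e, ePos_eq, EReal.real_coe_toENNReal, ENNReal.ofReal_sub _ b.coe_nonneg]
      simp
    · rw [e, ← EReal.coe_neg, neg_sub, ePos_eq, EReal.real_coe_toENNReal,
        ENNReal.ofReal_sub _ a.coe_nonneg]
      simp

/-- Fubini for the generalised integral of a function with integrable positive part. -/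
lemma geint_compProd {β : Type*} [MeasurableSpace β] [SFinite μ] (κ : Kernel α β)
    [IsSFiniteKernel κ] {f : α × β → EReal} (hf : Measurable f)
    (hfin : ∫⁻ p, ePos (f p) ∂(μ ⊗ₘ κ) < ⊤) :
    geint (μ ⊗ₘ κ) f = geint μ (fun a => geint (κ a) (fun b => f (a, b))) := by
  have hm1 : Measurable fun p => ePos (f p) := measurable_ePos.comp hf
  have hm2 : Measurable fun p => ePos (-f p) := measurable_ePos.comp hf.neg
  set p : α → ℝ≥0∞ := fun a => ∫⁻ b, ePos (f (a, b)) ∂κ a with hp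
  set n : α → ℝ≥0∞ := fun a => ∫⁻ b, ePos (-f (a, b)) ∂κ a with hn
  have hpm : Measurable p := hm1.lintegral_kernel_prod_right'
  have hnm : Measurable n := hm2.lintegral_kernel_prod_right'
  have e1 : ∫⁻ x, ePos (f x) ∂(μ ⊗ₘ κ) = ∫⁻ a, p a ∂μ := Measure.lintegral_compProd hm1
  have e2 : ∫⁻ x, ePos (-f x) ∂(μ ⊗ₘ κ) = ∫⁻ a, n a ∂μ := Measure.lintegral_compProd hm2
  rw [e1] at hfin
  have hae : ∀ᵐ a ∂μ, p a < ⊤ := ae_lt_top hpm hfin.ne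
  have f1 : ∫⁻ a, ePos (geint (κ a) (fun b => f (a, b))) ∂μ = ∫⁻ a, (p a - n a) ∂μ :=
    lintegral_congr_ae (hae.mono fun a ha => (toENNReal_coe_sub_coe ha.ne).1)
  have f2 : ∫⁻ a, ePos (-geint (κ a) (fun b => f (a, b))) ∂μ = ∫⁻ a, (n a - p a) ∂μ :=
    lintegral_congr_ae (hae.mono fun a ha => (toENNReal_coe_sub_coe ha.ne).2)
  have key : ∫⁻ a, (p a - n a) ∂μ + ∫⁻ a, n a ∂μ = ∫⁻ a, (n a - p a) ∂μ + ∫⁻ a, p a ∂μ := by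
    rw [← lintegral_add_right _ hnm, ← lintegral_add_right _ hpm]
    refine lintegral_congr fun a => ?_
    rw [tsub_add_eq_max, tsub_add_eq_max, max_comm]
  have hA : ∫⁻ a, (p a - n a) ∂μ ≠ ⊤ :=
    (lt_of_le_of_lt (lintegral_mono fun a => tsub_le_self) hfin).ne
  change ((∫⁻ x, ePos (f x) ∂(μ ⊗ₘ κ) : ℝ≥0∞) : EReal) - (∫⁻ x, ePos (-f x) ∂(μ ⊗ₘ κ) : ℝ≥0∞) =
    ((∫⁻ a, ePos (geint (κ a) (fun b => f (a, b))) ∂μ : ℝ≥0∞) : EReal) -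
    (∫⁻ a, ePos (-geint (κ a) (fun b => f (a, b))) ∂μ : ℝ≥0∞)
  rw [f1, f2, e1, e2]
  generalize ∫⁻ a, (p a - n a) ∂μ = A at *
  generalize ∫⁻ a, (n a - p a) ∂μ = B at *
  generalize ∫⁻ a, p a ∂μ = P at *
  generalize ∫⁻ a, n a ∂μ = N at *
  lift A to NNReal using hA
  lift P to NNReal using hfin.ne
  induction B using ENNReal.recTopCoe with
  | top =>
    have : N = ⊤ := by simpa using key
    simp [this]
  | coe B =>
    have : N ≠ ⊤ := by
      rintro rfl
      simp [← ENNReal.coe_add] at key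
    lift N to NNReal using this
    have key' : (A : ℝ) + N = B + P := by exact_mod_cast key
    have : (P : ℝ) - N = A - B := by linarith
    change (((P : ℝ) - N : ℝ) : EReal) = ((A - B : ℝ) : EReal)
    rw [this]

end geint

/-! ### Measurable random subsequences -/

section RandomSubsequence

lemma measurable_comp_index {Ω X : Type*} [MeasurableSpace Ω] [MeasurableSpace X]
    {a : ℕ → Ω → X} (ha : ∀ k, Measurable (a k)) {τ : Ω → ℕ} (hτ : Measurable τ) :
    Measurable fun ω => a (τ ω) ω := by
  have h : Measurable (fun p : Ω × ℕ => a p.2 p.1) :=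
    measurable_from_prod_countable_left fun n => ha n
  exact h.comp (measurable_id.prodMk hτ)

/-- A measurable random subsequence along which an extended real sequence attains its limsup:
the next index is the first one that is close enough to the limsup. -/
lemma exists_measurable_subseq_limsup {Ω : Type*} [MeasurableSpace Ω] {a : ℕ → Ω → EReal}
    (ha : ∀ k, Measurable (a k)) :
    ∃ τ : ℕ → Ω → ℕ, (∀ j, Measurable (τ j)) ∧ (∀ ω, StrictMono fun j => τ j ω) ∧
      ∀ ω, Tendsto (fun j => a (τ j ω) ω) atTop (𝓝 (limsup (fun k => a k ω) atTop)) := by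
  classical
  let _ : MetricSpace EReal := TopologicalSpace.metrizableSpaceMetric EReal
  set c : Ω → EReal := fun ω => limsup (fun k => a k ω) atTop with hc
  have hcm : Measurable c := Measurable.limsup ha
  have hcl : ∀ ω, MapClusterPt (c ω) atTop (fun k => a k ω) := fun ω => by
    rw [mapClusterPt_iff_frequently]
    intro s hs
    obtain hbot | hbot := eq_or_ne (c ω) ⊥
    · -- if the limsup is `⊥` the whole sequence converges
      have : Tendsto (fun k => a k ω) atTop (𝓝 ⊥) :=
        tendsto_of_le_liminf_of_limsup_le bot_le hbot.le
      rw [hbot] at hs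
      exact (this.eventually hs).frequently
    · obtain ⟨l, hl, hls⟩ := exists_Ioc_subset_of_mem_nhds hs ⟨⊥, bot_lt_iff_ne_bot.2 hbot⟩
      have h1 : ∃ᶠ k in atTop, l < a k ω := frequently_lt_of_lt_limsup (by isBoundedDefault) hl
      obtain htop | htop := eq_or_ne (c ω) ⊤
      · refine h1.mono fun k hk => hls ⟨hk, htop ▸ le_top⟩
      · obtain ⟨u, hu, hus⟩ := exists_Ico_subset_of_mem_nhds hs ⟨⊤, lt_top_iff_ne_top.2 htop⟩
        have h2 : ∀ᶠ k in atTop, a k ω < u := eventually_lt_of_limsup_lt hu (by isBoundedDefault)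
        refine (h1.and_eventually h2).mono fun k hk => ?_
        rcases le_total (a k ω) (c ω) with h | h
        · exact hls ⟨hk.1, h⟩
        · exact hus ⟨h, hk.2⟩
  have hex : ∀ (j n : ℕ) (ω : Ω), ∃ k, n < k ∧ dist (a k ω) (c ω) < 1 / ((j : ℝ) + 1) := by
    intro j n ω
    have := ((mapClusterPt_iff_frequently.1 (hcl ω)) _
      (Metric.ball_mem_nhds (c ω) (Nat.one_div_pos_of_nat (α := ℝ) (n := j)))).and_eventually
      (eventually_gt_atTop n)
    obtain ⟨k, hk⟩ := this.exists
    exact ⟨k, hk.2, hk.1⟩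
  let τ : ℕ → Ω → ℕ := fun j => Nat.rec (fun ω => Nat.find (hex 0 0 ω))
    (fun j t ω => Nat.find (hex (j + 1) (t ω) ω)) j
  have hτ0 : ∀ ω, dist (a (τ 0 ω) ω) (c ω) < 1 / (((0 : ℕ) : ℝ) + 1) := fun ω =>
    (Nat.find_spec (hex 0 0 ω)).2
  have hτs : ∀ j ω, τ j ω < τ (j + 1) ω ∧
      dist (a (τ (j + 1) ω) ω) (c ω) < 1 / (((j + 1 : ℕ) : ℝ) + 1) := fun j ω => by
    have h := Nat.find_spec (hex (j + 1) (τ j ω) ω)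
    exact h
  have hdm : ∀ k (r : ℝ), MeasurableSet {ω | dist (a k ω) (c ω) < r} := fun k r =>
    measurableSet_lt ((ha k).dist hcm) measurable_const
  have hτm : ∀ j, Measurable (τ j) := by
    intro j
    induction j with
    | zero =>
      refine measurable_find _ fun k => ?_
      exact (MeasurableSet.const _).inter (hdm k _)
    | succ j ih =>
      refine measurable_find _ fun k => ?_
      exact (measurableSet_lt ih measurable_const).inter (hdm k _)
  refine ⟨τ, hτm, fun ω => strictMono_nat_of_lt_succ fun j => (hτs j ω).1, fun ω => ?_⟩
  rw [tendsto_iff_dist_tendsto_zero]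
  refine squeeze_zero (fun _ => dist_nonneg) (fun j => ?_) tendsto_one_div_add_atTop_nhds_zero_nat
  cases j with
  | zero => exact (hτ0 ω).le
  | succ j => exact (hτs j ω).2.le

/-- Successive extraction: after passing to the limsup of `z`, finitely many further sequences are
made convergent along a common measurable random subsequence. -/
lemma exists_measurable_subseq_family {Ω : Type*} [MeasurableSpace Ω] {z : ℕ → Ω → EReal}
    (hz : ∀ k, Measurable (z k)) {c : ℕ → ℕ → Ω → EReal} (hc : ∀ i k, Measurable (c i k)) (m : ℕ) :
    ∃ τ : ℕ → Ω → ℕ, (∀ j, Measurable (τ j)) ∧ (∀ ω, StrictMono fun j => τ j ω) ∧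
      (∀ ω, Tendsto (fun j => z (τ j ω) ω) atTop (𝓝 (limsup (fun k => z k ω) atTop))) ∧
      ∀ i < m, ∀ ω, Tendsto (fun j => c i (τ j ω) ω) atTop
        (𝓝 (limsup (fun j => c i (τ j ω) ω) atTop)) := by
  induction m with
  | zero =>
    obtain ⟨τ, h1, h2, h3⟩ := exists_measurable_subseq_limsup hz
    exact ⟨τ, h1, h2, h3, fun i hi => absurd hi (Nat.not_lt_zero i)⟩
  | succ m ih =>
    obtain ⟨τ, h1, h2, h3, h4⟩ := ih
    have hm : ∀ j, Measurable fun ω => c m (τ j ω) ω := fun j =>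
      measurable_comp_index (hc m) (h1 j)
    obtain ⟨σ, s1, s2, s3⟩ := exists_measurable_subseq_limsup hm
    refine ⟨fun j ω => τ (σ j ω) ω, fun j => measurable_comp_index h1 (s1 j),
      fun ω => (h2 ω).comp (s2 ω), fun ω => (h3 ω).comp (s2 ω).tendsto_atTop, fun i hi ω => ?_⟩
    rcases Nat.lt_succ_iff_lt_or_eq.1 hi with hi | rfl
    · have := (h4 i hi ω).comp (s2 ω).tendsto_atTop
      have e := this.limsup_eq
      simp only [Function.comp_def] at e this
      rw [e]
      exact this
    · have := s3 ω
      rw [this.limsup_eq]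
      exact this

/-- Measurable random subsequences: along a measurable random subsequence, an extended real
sequence converges to its limsup while a vector sequence converges wherever it is bounded. -/
lemma exists_measurable_subseq {Ω : Type*} [MeasurableSpace Ω] {d : ℕ} {z : ℕ → Ω → EReal}
    (hz : ∀ k, Measurable (z k)) {v : ℕ → Ω → Evec d} (hv : ∀ k, Measurable (v k)) :
    ∃ (τ : ℕ → Ω → ℕ) (w : Ω → Evec d), (∀ j, Measurable (τ j)) ∧ Measurable w ∧
      (∀ ω, StrictMono fun j => τ j ω) ∧
      (∀ ω, Tendsto (fun j => z (τ j ω) ω) atTop (𝓝 (limsup (fun k => z k ω) atTop))) ∧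
      ∀ ω, (∃ R : ℝ, ∀ k, ‖v k ω‖ ≤ R) → Tendsto (fun j => v (τ j ω) ω) atTop (𝓝 (w ω)) := by
  classical
  let c : ℕ → ℕ → Ω → EReal := fun i k ω => if h : i < d then ((v k ω ⟨i, h⟩ : ℝ) : EReal) else 0
  have hvm : ∀ k (i : Fin d), Measurable fun ω => v k ω i := fun k i => by
    exact (EuclideanSpace.proj (𝕜 := ℝ) i).continuous.measurable.comp (hv k)
  have hc : ∀ i k, Measurable (c i k) := by
    intro i k
    by_cases h : i < d
    · simp only [c, h, dif_pos]
      exact (hvm k ⟨i, h⟩).coe_real_ereal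
    · simp only [c, h, dif_neg, not_false_iff]
      exact measurable_const
  obtain ⟨τ, h1, h2, h3, h4⟩ := exists_measurable_subseq_family hz hc d
  let l : Fin d → Ω → ℝ := fun i ω => (limsup (fun j => c i (τ j ω) ω) atTop).toReal
  have hl : ∀ i, Measurable (l i) := fun i =>
    (Measurable.limsup fun j => measurable_comp_index (hc i) (h1 j)).ereal_toReal
  refine ⟨τ, fun ω => WithLp.toLp 2 fun i => l i ω, h1, ?_, h2, h3, fun ω ⟨R, hR⟩ => ?_⟩
  · exact (PiLp.continuous_toLp 2 _).measurable.comp (measurable_pi_lambda _ hl)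
  · have hcoord : ∀ i : Fin d, Tendsto (fun j => v (τ j ω) ω i) atTop (𝓝 (l i ω)) := by
      intro i
      have t := h4 i i.2 ω
      have hce : ∀ k, c i k ω = ((v k ω i : ℝ) : EReal) := fun k => by simp [c]
      have hb : ∀ k, |v k ω i| ≤ R := fun k => by
        have := PiLp.norm_apply_le (v k ω) i
        rw [Real.norm_eq_abs] at this
        exact this.trans (hR k)
      have hlow : ((-R : ℝ) : EReal) ≤ limsup (fun j => c i (τ j ω) ω) atTop :=
        ge_of_tendsto' t fun j => by
          rw [hce]; exact EReal.coe_le_coe_iff.2 (abs_le.1 (hb _)).1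
      have hup : limsup (fun j => c i (τ j ω) ω) atTop ≤ ((R : ℝ) : EReal) :=
        le_of_tendsto' t fun j => by
          rw [hce]; exact EReal.coe_le_coe_iff.2 (abs_le.1 (hb _)).2
      have n1 : limsup (fun j => c i (τ j ω) ω) atTop ≠ ⊤ := (hup.trans_lt (EReal.coe_lt_top R)).ne
      have n2 : limsup (fun j => c i (τ j ω) ω) atTop ≠ ⊥ :=
        ((EReal.bot_lt_coe (-R)).trans_le hlow).ne'
      have := (EReal.tendsto_toReal n1 n2).comp t
      exact this.congr fun j => by simp [hce]
    have := (PiLp.continuous_toLp 2 (fun _ : Fin d => ℝ)).continuousAt.tendsto.comp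
      (tendsto_pi_nhds.2 hcoord)
    exact this

end RandomSubsequence

/-! ### Measurable regression on the price increments -/

section Regression

variable {d : ℕ} {Y : Type*} [MeasurableSpace Y]

/-- The directions `g` for which `⟪g, s⟫ = 0` almost surely (the redundant portfolios). -/
def nullDir (μ : Measure Y) (s : Y → Evec d) : Submodule ℝ (Evec d) where
  carrier := {g | ∀ᵐ y ∂μ, ⟪g, s y⟫_ℝ = 0}
  add_mem' := fun {a b} ha hb => by
    change ∀ᵐ y ∂μ, ⟪a, s y⟫_ℝ = 0 at ha
    change ∀ᵐ y ∂μ, ⟪b, s y⟫_ℝ = 0 at hb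
    change ∀ᵐ y ∂μ, ⟪a + b, s y⟫_ℝ = 0
    filter_upwards [ha, hb] with y h1 h2
    rw [inner_add_left, h1, h2, add_zero]
  zero_mem' := by simp
  smul_mem' := fun c a ha => by
    change ∀ᵐ y ∂μ, ⟪a, s y⟫_ℝ = 0 at ha
    change ∀ᵐ y ∂μ, ⟪c • a, s y⟫_ℝ = 0
    filter_upwards [ha] with y h1
    rw [real_inner_smul_left, h1, mul_zero]

lemma mem_nullDir {μ : Measure Y} {s : Y → Evec d} {g : Evec d} :
    g ∈ nullDir μ s ↔ ∀ᵐ y ∂μ, ⟪g, s y⟫_ℝ = 0 := Iff.rfl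

/-- The weight `1 / (1 + |v|²)`, which makes all second moments finite. -/
def wgt (v : Evec d) : ℝ := 1 / (1 + ‖v‖ ^ 2)

lemma wgt_pos (v : Evec d) : 0 < wgt v := by unfold wgt; positivity

lemma measurable_wgt : Measurable (wgt : Evec d → ℝ) := by
  unfold wgt
  exact measurable_const.div (measurable_const.add (measurable_norm.pow_const 2))

lemma wgt_mul_sq_le (v : Evec d) : wgt v * ‖v‖ ^ 2 ≤ 1 := by
  unfold wgt
  rw [one_div, inv_mul_le_iff₀ (by positivity)]
  linarith

lemma wgt_inner_le (a b v : Evec d) : |wgt v * ⟪a, v⟫_ℝ * ⟪b, v⟫_ℝ| ≤ ‖a‖ * ‖b‖ := by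
  rw [abs_mul, abs_mul, abs_of_pos (wgt_pos v)]
  calc wgt v * |⟪a, v⟫_ℝ| * |⟪b, v⟫_ℝ| ≤ wgt v * (‖a‖ * ‖v‖) * (‖b‖ * ‖v‖) := by
        have := (wgt_pos v).le
        gcongr <;> exact abs_real_inner_le_norm _ _
    _ = (wgt v * ‖v‖ ^ 2) * (‖a‖ * ‖b‖) := by ring
    _ ≤ 1 * (‖a‖ * ‖b‖) := by gcongr; exact wgt_mul_sq_le v
    _ = _ := one_mul _

variable (μ : Measure Y) [IsProbabilityMeasure μ] {s : Y → Evec d}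

lemma integrable_wgt_smul (hs : Measurable s) (a : Evec d) :
    Integrable (fun y => (wgt (s y) * ⟪a, s y⟫_ℝ) • s y) μ := by
  refine Integrable.of_bound (C := ‖a‖) ?_ (Eventually.of_forall fun y => ?_)
  · have h1 : Measurable fun y => wgt (s y) * ⟪a, s y⟫_ℝ :=
      (measurable_wgt.comp hs).mul (measurable_const.inner hs)
    exact (h1.smul hs).aestronglyMeasurable
  · rw [norm_smul, Real.norm_eq_abs, abs_mul, abs_of_pos (wgt_pos _)]
    calc wgt (s y) * |⟪a, s y⟫_ℝ| * ‖s y‖ ≤ wgt (s y) * (‖a‖ * ‖s y‖) * ‖s y‖ := by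
          have := (wgt_pos (s y)).le
          gcongr
          exact abs_real_inner_le_norm _ _
      _ = (wgt (s y) * ‖s y‖ ^ 2) * ‖a‖ := by ring
      _ ≤ 1 * ‖a‖ := by gcongr; exact wgt_mul_sq_le _
      _ = _ := one_mul _

lemma integrable_wgt_inner (hs : Measurable s) (a b : Evec d) :
    Integrable (fun y => wgt (s y) * ⟪a, s y⟫_ℝ * ⟪b, s y⟫_ℝ) μ := by
  refine Integrable.of_bound (C := ‖a‖ * ‖b‖) ?_ (Eventually.of_forall fun y => ?_)
  · exact (((measurable_wgt.comp hs).mul (measurable_const.inner hs)).mul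
      (measurable_const.inner hs)).aestronglyMeasurable
  · exact wgt_inner_le _ _ _

/-- The weighted second-moment operator `a ↦ ∫ w ⟪a, s⟫ s dμ`. -/
def momentOp (hs : Measurable s) : Evec d →ₗ[ℝ] Evec d where
  toFun a := ∫ y, (wgt (s y) * ⟪a, s y⟫_ℝ) • s y ∂μ
  map_add' a b := by
    rw [← integral_add (integrable_wgt_smul μ hs a) (integrable_wgt_smul μ hs b)]
    congr 1; ext1 y
    rw [inner_add_left, mul_add, add_smul]
  map_smul' c a := by
    rw [RingHom.id_apply, ← integral_smul]
    congr 1; ext1 y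
    rw [real_inner_smul_left, smul_smul]
    congr 1; ring

lemma inner_momentOp (hs : Measurable s) (a b : Evec d) :
    ⟪b, momentOp μ hs a⟫_ℝ = ∫ y, wgt (s y) * ⟪a, s y⟫_ℝ * ⟪b, s y⟫_ℝ ∂μ := by
  change ⟪b, ∫ y, (wgt (s y) * ⟪a, s y⟫_ℝ) • s y ∂μ⟫_ℝ = _
  rw [← integral_inner (integrable_wgt_smul μ hs a)]
  congr 1; ext1 y
  rw [real_inner_smul_right]

/-- The moment operator `M` satisfies `|M a|² ≤ ⟪a, M a⟫`, that is `0 ≤ M² ≤ M`; this follows from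
`2 ⟪a, s⟫ ⟪M a, s⟫ ≤ ⟪a, s⟫² + ⟪M a, s⟫²` and the bound on the weight. -/
lemma norm_momentOp_sq_le (hs : Measurable s) (a : Evec d) :
    ‖momentOp μ hs a‖ ^ 2 ≤ ⟪a, momentOp μ hs a⟫_ℝ := by
  set b := momentOp μ hs a with hb
  have h1 : ‖b‖ ^ 2 = ∫ y, wgt (s y) * ⟪a, s y⟫_ℝ * ⟪b, s y⟫_ℝ ∂μ := by
    rw [← inner_momentOp μ hs a b, ← hb, real_inner_self_eq_norm_sq]
  have h2 : ∫ y, wgt (s y) * ⟪b, s y⟫_ℝ * ⟪b, s y⟫_ℝ ∂μ ≤ ‖b‖ ^ 2 := by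
    calc _ ≤ ∫ _, ‖b‖ * ‖b‖ ∂μ := integral_mono (integrable_wgt_inner μ hs b b)
          (integrable_const _) fun y => (le_abs_self _).trans (wgt_inner_le b b (s y))
      _ = _ := by simp [sq]
  have h3 : ∫ y, wgt (s y) * ⟪a, s y⟫_ℝ * ⟪b, s y⟫_ℝ ∂μ ≤
      ∫ y, (1 / 2 * (wgt (s y) * ⟪a, s y⟫_ℝ * ⟪a, s y⟫_ℝ)
        + 1 / 2 * (wgt (s y) * ⟪b, s y⟫_ℝ * ⟪b, s y⟫_ℝ)) ∂μ := by
    refine integral_mono (integrable_wgt_inner μ hs a b)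
      (((integrable_wgt_inner μ hs a a).const_mul _).add
        ((integrable_wgt_inner μ hs b b).const_mul _)) fun y => ?_
    have := mul_nonneg (wgt_pos (s y)).le (sq_nonneg (⟪a, s y⟫_ℝ - ⟪b, s y⟫_ℝ))
    simp only
    nlinarith
  rw [integral_add ((integrable_wgt_inner μ hs a a).const_mul _)
    ((integrable_wgt_inner μ hs b b).const_mul _), integral_const_mul, integral_const_mul] at h3
  rw [inner_momentOp]
  linarith

lemma momentOp_eq_zero_of_mem (hs : Measurable s) {a : Evec d} (ha : a ∈ nullDir μ s) :
    momentOp μ hs a = 0 := by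
  refine integral_eq_zero_of_ae ?_
  filter_upwards [mem_nullDir.1 ha] with y hy
  simp [hy]

lemma momentOp_mem (hs : Measurable s) (a : Evec d) : momentOp μ hs a ∈ (nullDir μ s)ᗮ := by
  rw [Submodule.mem_orthogonal]
  intro g hg
  rw [inner_momentOp]
  refine integral_eq_zero_of_ae ?_
  filter_upwards [mem_nullDir.1 hg] with y hy
  simp [hy]

lemma mem_nullDir_of_inner_eq_zero (hs : Measurable s) {a : Evec d}
    (ha : ⟪a, momentOp μ hs a⟫_ℝ = 0) : a ∈ nullDir μ s := by
  rw [inner_momentOp, integral_eq_zero_iff_of_nonneg (fun y => ?_)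
    (integrable_wgt_inner μ hs a a)] at ha
  · filter_upwards [ha] with y hy
    have h : wgt (s y) * ⟪a, s y⟫_ℝ * ⟪a, s y⟫_ℝ = 0 := hy
    rcases mul_eq_zero.1 h with h | h
    · exact (mul_eq_zero.1 h).resolve_left (wgt_pos _).ne'
    · exact h
  · simp only [Pi.zero_apply]
    rw [mul_assoc]
    exact mul_nonneg (wgt_pos _).le (mul_self_nonneg _)

/-- On the orthogonal complement of the null directions `a ↦ a - M a` is a strict contraction: the
quadratic form `⟪a, M a⟫` has a positive minimum on the unit sphere there. -/
lemma exists_contraction (hs : Measurable s) :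
    ∃ c : ℝ, 0 ≤ c ∧ c < 1 ∧ ∀ a ∈ (nullDir μ s)ᗮ, ‖a - momentOp μ hs a‖ ^ 2 ≤ c * ‖a‖ ^ 2 := by
  have hcont : Continuous (momentOp μ hs) := LinearMap.continuous_of_finiteDimensional _
  set K : Set (Evec d) := Metric.sphere 0 1 ∩ ((nullDir μ s)ᗮ : Set (Evec d)) with hK
  have hKc : IsCompact K := (isCompact_sphere _ _).inter_right (Submodule.isClosed_orthogonal _)
  have step : ∀ a, ‖a - momentOp μ hs a‖ ^ 2 ≤ ‖a‖ ^ 2 - ⟪a, momentOp μ hs a⟫_ℝ := fun a => by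
    rw [norm_sub_sq_real]
    linarith [norm_momentOp_sq_le μ hs a]
  have hpos : ∀ a, 0 ≤ ⟪a, momentOp μ hs a⟫_ℝ := fun a =>
    (sq_nonneg _).trans (norm_momentOp_sq_le μ hs a)
  obtain ⟨m, hm0, hm⟩ : ∃ m : ℝ, 0 < m ∧ ∀ a ∈ K, m ≤ ⟪a, momentOp μ hs a⟫_ℝ := by
    rcases K.eq_empty_or_nonempty with h | h
    · exact ⟨1, one_pos, fun a ha => absurd ha (by simp [h])⟩
    · obtain ⟨a, ha, hmin⟩ := hKc.exists_isMinOn h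
        (f := fun a => ⟪a, momentOp μ hs a⟫_ℝ) (continuous_id.inner hcont).continuousOn
      refine ⟨_, lt_of_le_of_ne (hpos a) fun h0 => ?_, fun b hb => hmin hb⟩
      have h1 := mem_nullDir_of_inner_eq_zero μ hs h0.symm
      have h2 : ⟪a, a⟫_ℝ = 0 := (Submodule.mem_orthogonal _ _).1 ha.2 a h1
      have h3 : ‖a‖ = 1 := by simpa using ha.1
      rw [real_inner_self_eq_norm_sq, h3] at h2
      norm_num at h2
  refine ⟨1 - min m 1, by linarith [min_le_right m 1], by linarith [lt_min hm0 one_pos],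
    fun a ha => ?_⟩
  rcases eq_or_ne a 0 with rfl | h0
  · simp
  have hn : 0 < ‖a‖ := norm_pos_iff.2 h0
  have hu : ‖a‖⁻¹ • a ∈ K := by
    refine ⟨?_, Submodule.smul_mem _ _ ha⟩
    simp [norm_smul, hn.ne']
  have := hm _ hu
  rw [map_smul, real_inner_smul_left, real_inner_smul_right] at this
  have h4 : m * ‖a‖ ^ 2 ≤ ⟪a, momentOp μ hs a⟫_ℝ := by
    have e : ‖a‖⁻¹ * (‖a‖⁻¹ * ⟪a, momentOp μ hs a⟫_ℝ) = ⟪a, momentOp μ hs a⟫_ℝ / ‖a‖ ^ 2 := by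
      field_simp
    rw [e, le_div_iff₀ (by positivity)] at this
    exact this
  have h5 : min m 1 * ‖a‖ ^ 2 ≤ m * ‖a‖ ^ 2 := by gcongr; exact min_le_left _ _
  linarith [step a]

/-- Landweber iteration: iterating `e ↦ e - M e`, with `M` the moment operator, converges to the
orthogonal projection onto `ker M`, the space of null directions. -/
lemma tendsto_landweber (hs : Measurable s) {e : ℕ → Evec d}
    (he : ∀ n, e (n + 1) = e n - momentOp μ hs (e n)) :
    Tendsto e atTop (𝓝 ((nullDir μ s).starProjection (e 0))) := by
  obtain ⟨c, hc0, hc1, hc⟩ := exists_contraction μ hs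
  set b := (nullDir μ s).starProjection (e 0) with hb
  have hbN : b ∈ nullDir μ s := Submodule.starProjection_apply_mem _ _
  have hmem : ∀ n, e n - b ∈ (nullDir μ s)ᗮ := by
    intro n
    induction n with
    | zero => exact Submodule.sub_starProjection_mem_orthogonal _
    | succ n ih =>
      rw [he, sub_right_comm]
      exact Submodule.sub_mem _ ih (momentOp_mem μ hs _)
  have hstep : ∀ n, ‖e n - b‖ ^ 2 ≤ c ^ n * ‖e 0 - b‖ ^ 2 := by
    intro n
    induction n with
    | zero => simp
    | succ n ih =>
      have e1 : e (n + 1) - b = (e n - b) - momentOp μ hs (e n - b) := by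
        rw [he, map_sub, momentOp_eq_zero_of_mem μ hs hbN]
        abel
      rw [e1]
      calc _ ≤ c * ‖e n - b‖ ^ 2 := hc _ (hmem n)
        _ ≤ c * (c ^ n * ‖e 0 - b‖ ^ 2) := by gcongr
        _ = _ := by ring
  rw [tendsto_iff_norm_sub_tendsto_zero]
  have h0 : Tendsto (fun n => ‖e n - b‖ ^ 2) atTop (𝓝 0) := by
    refine squeeze_zero (fun _ => by positivity) hstep ?_
    simpa using (tendsto_pow_atTop_nhds_zero_of_lt_one hc0 hc1).mul_const (‖e 0 - b‖ ^ 2)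
  have := (Real.continuous_sqrt.tendsto 0).comp h0
  simpa [Function.comp_def, Real.sqrt_sq] using this

end Regression

/-- Measurable regression: if, for given `ω`, the random variable `r` is a linear function
`⟪p, s⟫` of `s`, then the minimal-norm coefficient `p` can be chosen measurably in `ω`. -/
lemma exists_measurable_regression {d : ℕ} {Ω Y : Type*} [MeasurableSpace Ω] [MeasurableSpace Y]
    (κ : Kernel Ω Y) [IsMarkovKernel κ] {s : Ω × Y → Evec d} (hs : Measurable s)
    {r : Ω × Y → ℝ} (hr : Measurable r) :
    ∃ g : Ω → Evec d, Measurable g ∧ ∀ ω, (∃ p : Evec d, ∀ᵐ y ∂κ ω, ⟪p, s (ω, y)⟫_ℝ = r (ω, y)) →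
      (∀ᵐ y ∂κ ω, ⟪g ω, s (ω, y)⟫_ℝ = r (ω, y)) ∧
      g ω ∈ (nullDir (κ ω) fun y => s (ω, y))ᗮ := by
  let G : ℕ → Ω → Evec d := fun n => Nat.rec (fun _ => 0) (fun _ g ω =>
    g ω + ∫ y, (wgt (s (ω, y)) * (r (ω, y) - ⟪g ω, s (ω, y)⟫_ℝ)) • s (ω, y) ∂κ ω) n
  have hGs : ∀ n ω, G (n + 1) ω = G n ω +
    ∫ y, (wgt (s (ω, y)) * (r (ω, y) - ⟪G n ω, s (ω, y)⟫_ℝ)) • s (ω, y) ∂κ ω := fun _ _ => rfl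
  have hGm : ∀ n, Measurable (G n) := by
    intro n
    induction n with
    | zero => exact measurable_const
    | succ n ih =>
      have h1 : Measurable fun p : Ω × Y =>
          (wgt (s p) * (r p - ⟪G n p.1, s p⟫_ℝ)) • s p :=
        ((measurable_wgt.comp hs).mul (hr.sub ((ih.comp measurable_fst).inner hs))).smul hs
      exact ih.add (h1.stronglyMeasurable.integral_kernel_prod_right' (κ := κ)).measurable
  obtain ⟨τ, w, _, hw, hτ, _, hlim⟩ :=
    exists_measurable_subseq (z := fun _ _ => 0) (fun _ => measurable_const) hGm
  refine ⟨w, hw, fun ω ⟨p, hp⟩ => ?_⟩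
  have hsω : Measurable fun y => s (ω, y) := hs.comp measurable_prodMk_left
  have hstep : ∀ n, G (n + 1) ω - p =
      (G n ω - p) - momentOp (κ ω) hsω (G n ω - p) := by
    intro n
    have : ∫ y, (wgt (s (ω, y)) * (r (ω, y) - ⟪G n ω, s (ω, y)⟫_ℝ)) • s (ω, y) ∂κ ω =
        -momentOp (κ ω) hsω (G n ω - p) := by
      change _ = -∫ y, (wgt (s (ω, y)) * ⟪G n ω - p, s (ω, y)⟫_ℝ) • s (ω, y) ∂κ ω
      rw [← integral_neg]
      refine integral_congr_ae ?_
      filter_upwards [hp] with y hy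
      rw [← hy, inner_sub_left, ← neg_smul]
      congr 1; ring
    rw [hGs, this]
    abel
  have ht := tendsto_landweber (κ ω) hsω (e := fun n => G n ω - p) hstep
  set N := nullDir (κ ω) fun y => s (ω, y) with hN
  have e0 : G 0 ω - p = -p := by change (0 : Evec d) - p = -p; simp
  have ht2 : Tendsto (fun n => G n ω) atTop (𝓝 (p - N.starProjection p)) := by
    have := ht.add_const p
    simp only [e0, map_neg, sub_add_cancel] at this
    convert this using 2
    abel
  have hbd : ∃ R : ℝ, ∀ k, ‖G k ω‖ ≤ R := by
    obtain ⟨R, hR⟩ := (ht2.norm).bddAbove_range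
    exact ⟨R, fun k => hR ⟨k, rfl⟩⟩
  have hwe : w ω = p - N.starProjection p :=
    tendsto_nhds_unique (hlim ω hbd) (ht2.comp (hτ ω).tendsto_atTop)
  rw [hwe]
  refine ⟨?_, Submodule.sub_starProjection_mem_orthogonal _⟩
  have hq : N.starProjection p ∈ N := Submodule.starProjection_apply_mem _ _
  filter_upwards [hp, mem_nullDir.1 hq] with y h1 h2
  rw [inner_sub_left, h1, h2, sub_zero]

/-- A bounded sequence of vectors is uniformly controlled by finitely many of its terms: for every
linear functional nonnegative along the sequence, all its values are bounded by a fixed multiple of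
the sum of the first few, with constants independent of the functional. -/
lemma exists_dominating_index {E : Type*} [NormedAddCommGroup E] [NormedSpace ℝ E]
    [FiniteDimensional ℝ E] (v : ℕ → E) (R : ℝ) (hR : ∀ j, ‖v j‖ ≤ R) :
    ∃ (N : ℕ) (m : ℝ), 0 ≤ m ∧ ∀ f : E →ₗ[ℝ] ℝ, (∀ j, 0 ≤ f (v j)) →
      ∀ j, f (v j) ≤ m * ∑ i ∈ Finset.range N, f (v i) := by
  let sp : ℕ →o Submodule ℝ E := ⟨fun n => Submodule.span ℝ (v '' Set.Iio n), fun a b h =>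
    Submodule.span_mono (Set.image_mono (Set.Iio_subset_Iio h))⟩
  obtain ⟨N, hN⟩ := monotone_stabilizes_iff_noetherian.2 (inferInstance : IsNoetherian ℝ E) sp
  have hmem : ∀ j, v j ∈ sp N := by
    intro j
    rw [hN (max N (j + 1)) (le_max_left _ _)]
    exact Submodule.subset_span ⟨j, by simp, rfl⟩
  let L : (Fin N → ℝ) →ₗ[ℝ] E := Fintype.linearCombination ℝ (fun i : Fin N => v i)
  have hrange : LinearMap.range L = sp N := by
    rw [Fintype.range_linearCombination]
    change _ = Submodule.span ℝ (v '' Set.Iio N)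
    congr 1
    ext x
    constructor
    · rintro ⟨i, rfl⟩; exact ⟨i, i.2, rfl⟩
    · rintro ⟨i, hi, rfl⟩; exact ⟨⟨i, hi⟩, rfl⟩
  obtain ⟨σ, hσ⟩ := L.rangeRestrict.exists_rightInverse_of_surjective (LinearMap.range_rangeRestrict L)
  let σc : LinearMap.range L →L[ℝ] (Fin N → ℝ) := LinearMap.toContinuousLinearMap σ
  refine ⟨N, ‖σc‖ * max R 0, by positivity, fun f hf j => ?_⟩
  let x : LinearMap.range L := ⟨v j, hrange ▸ hmem j⟩
  have h1 : L (σc x) = v j := by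
    have := congrArg Subtype.val (LinearMap.congr_fun hσ x)
    exact this
  have h2 : ∀ i, σc x i ≤ ‖σc‖ * max R 0 := fun i => by
    calc σc x i ≤ ‖σc x i‖ := Real.le_norm_self _
      _ ≤ ‖σc x‖ := norm_le_pi_norm _ _
      _ ≤ ‖σc‖ * ‖x‖ := σc.le_opNorm x
      _ ≤ ‖σc‖ * max R 0 := by
        gcongr
        exact (hR j).trans (le_max_left _ _)
  rw [← h1, Fintype.linearCombination_apply, map_sum, Finset.mul_sum,
    ← Fin.sum_univ_eq_sum_range (fun i => ‖σc‖ * max R 0 * f (v i)) N]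
  refine Finset.sum_le_sum fun i _ => ?_
  rw [map_smul, smul_eq_mul]
  exact mul_le_mul_of_nonneg_right (h2 i) (hf i)

/-! ### The history model -/

section Model

set_option linter.unusedSectionVars false

/-- Appending one outcome to a history. -/
def hcons {t : ℕ} (ω : Hist Ωs t) (y : Ωs (t + 1)) : Hist Ωs (t + 1) := (ω, y)

lemma hcons_fst {t : ℕ} (ω : Hist Ωs t) (y : Ωs (t + 1)) : (hcons ω y).1 = ω := rfl

lemma hcons_snd {t : ℕ} (ω : Hist Ωs t) (y : Ωs (t + 1)) : (hcons ω y).2 = y := rfl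

variable (q : ∀ t, Kernel (Hist Ωs t) (Ωs (t + 1))) [∀ t, IsMarkovKernel (q t)]
  (S : ∀ t, Hist Ωs t → Evec d)

lemma measurable_hist_fst (t : ℕ) : Measurable fun ω : Hist Ωs (t + 1) => ω.1 :=
  measurable_fst (α := Hist Ωs t) (β := Ωs (t + 1))

lemma measurable_deltaS (hS : ∀ t, Measurable (S t)) (t : ℕ) :
    Measurable fun p : Hist Ωs t × Ωs (t + 1) => deltaS S t p.1 p.2 :=
  Measurable.sub (hS (t + 1)) ((hS t).comp measurable_fst)

lemma Pmes_succ_aux (t : ℕ) [SFinite (Pmes q t)] :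
    Pmes q (t + 1) = (Pmes q t) ⊗ₘ (q t) := by
  rw [Measure.compProd_eq_comp_prod]
  change (Pmes q t).bind _ = (Pmes q t).bind _
  congr 1
  funext ω
  rw [Kernel.prod_apply, Kernel.id_apply, Measure.dirac_prod]
  rfl

instance isProbabilityMeasure_Pmes : ∀ t, IsProbabilityMeasure (Pmes q t)
  | 0 => Measure.dirac.isProbabilityMeasure (α := Hist Ωs 0)
  | t + 1 => by
    have := isProbabilityMeasure_Pmes t
    rw [Pmes_succ_aux q t]
    exact inferInstanceAs (IsProbabilityMeasure ((Pmes q t) ⊗ₘ (q t)))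

lemma Pmes_succ (t : ℕ) : Pmes q (t + 1) = (Pmes q t) ⊗ₘ (q t) := Pmes_succ_aux q t

lemma ae_ae_of_ae_succ {t : ℕ} {p : Hist Ωs (t + 1) → Prop} (h : ∀ᵐ ω ∂Pmes q (t + 1), p ω) :
    ∀ᵐ ω ∂Pmes q t, ∀ᵐ y ∂q t ω, p (hcons ω y) := by
  rw [Pmes_succ] at h
  exact Measure.ae_ae_of_ae_compProd h

lemma ae_succ_of_ae_ae {t : ℕ} {p : Hist Ωs (t + 1) → Prop} (hp : MeasurableSet {ω | p ω})
    (h : ∀ᵐ ω ∂Pmes q t, ∀ᵐ y ∂q t ω, p (hcons ω y)) : ∀ᵐ ω ∂Pmes q (t + 1), p ω := by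
  rw [Pmes_succ]
  exact (Measure.ae_compProd_iff hp).2 h

lemma ae_succ_fst_iff {t : ℕ} {p : Hist Ωs t → Prop} :
    (∀ᵐ ω ∂Pmes q (t + 1), p ω.1) ↔ ∀ᵐ ω ∂Pmes q t, p ω := by
  constructor
  · intro h
    filter_upwards [ae_ae_of_ae_succ q h] with ω hω
    exact (eventually_const (f := ae (q t ω))).1 hω
  · intro h
    have hfst : ((Pmes q t) ⊗ₘ (q t)).map Prod.fst = Pmes q t := Measure.fst_compProd _ _
    rw [Pmes_succ]
    rw [← hfst] at h
    exact ae_of_ae_map measurable_fst.aemeasurable h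

lemma lintegral_succ {t : ℕ} {f : Hist Ωs (t + 1) → ℝ≥0∞} (hf : Measurable f) :
    ∫⁻ ω, f ω ∂Pmes q (t + 1) = ∫⁻ ω, ∫⁻ y, f (hcons ω y) ∂q t ω ∂Pmes q t := by
  rw [Pmes_succ]
  exact Measure.lintegral_compProd hf

lemma geint_succ {t : ℕ} {f : Hist Ωs (t + 1) → EReal} (hf : Measurable f)
    (hfin : ∫⁻ ω, ePos (f ω) ∂Pmes q (t + 1) < ⊤) :
    geint (Pmes q (t + 1)) f = geint (Pmes q t) fun ω => geint (q t ω) fun y => f (hcons ω y) := by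
  rw [Pmes_succ] at hfin ⊢
  exact geint_compProd (q t) hf hfin

/-- A time-`t` index extends to all later times through the projections onto `Ω^t`. -/
lemma exists_index_extension {t : ℕ} {τ : Hist Ωs t → ℕ} (hτ : Measurable τ) :
    ∃ σ : ∀ s, Hist Ωs s → ℕ, (∀ s, Measurable (σ s)) ∧ σ t = τ ∧
      ∀ s, t ≤ s → ∀ ω : Hist Ωs (s + 1), σ (s + 1) ω = σ s ω.1 := by
  let σ : ∀ s, Hist Ωs s → ℕ := fun s => Nat.rec
    (if h : 0 = t then fun ω => τ (h ▸ ω) else fun _ => 0)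
    (fun s σs => if h : s + 1 = t then fun ω => τ (h ▸ ω) else fun ω => σs ω.1) s
  have h0 : σ 0 = if h : 0 = t then fun ω => τ (h ▸ ω) else fun _ => 0 := rfl
  have h1 : ∀ s, σ (s + 1) = if h : s + 1 = t then fun ω => τ (h ▸ ω) else fun ω => σ s ω.1 :=
    fun _ => rfl
  refine ⟨σ, fun s => ?_, ?_, fun s hs ω => ?_⟩
  · induction s with
    | zero =>
      rw [h0]
      split_ifs with h
      · subst h; exact hτ
      · exact measurable_const
    | succ s ih =>
      rw [h1]
      split_ifs with h
      · subst h; exact hτ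
      · exact ih.comp (measurable_hist_fst s)
  · cases t with
    | zero => rw [h0, dif_pos rfl]
    | succ t => rw [h1, dif_pos rfl]
  · rw [h1, dif_neg (by omega)]

/-! ### Admissible continuations -/

/-- `Adm q S n t ξ φ`: starting at time `t` with capital `ξ` and following `φ`, the wealth `n`
periods later is almost surely nonnegative. -/
def Adm : ∀ (n t : ℕ), (Hist Ωs t → ℝ) → (∀ t, Hist Ωs t → Evec d) → Prop
  | 0, t, ξ, _ => ∀ᵐ ω ∂Pmes q t, 0 ≤ ξ ω
  | n + 1, t, ξ, φ =>
    Adm n (t + 1) (fun ω => ξ ω.1 + ⟪φ t ω.1, deltaS S t ω.1 ω.2⟫_ℝ) φ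

variable {q S}

lemma Adm.mono {n : ℕ} : ∀ {t : ℕ} {ξ ξ' : Hist Ωs t → ℝ} {φ : ∀ t, Hist Ωs t → Evec d},
    Adm q S n t ξ φ → (∀ᵐ ω ∂Pmes q t, ξ ω ≤ ξ' ω) → Adm q S n t ξ' φ := by
  induction n with
  | zero =>
    intro t ξ ξ' φ h hle
    filter_upwards [show ∀ᵐ ω ∂Pmes q t, 0 ≤ ξ ω from h, hle] with ω h1 h2 using h1.trans h2
  | succ n ih =>
    intro t ξ ξ' φ h hle
    refine ih (t := t + 1) h ?_
    filter_upwards [(ae_succ_fst_iff q).2 hle] with ω hω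
    linarith

lemma Adm.congr_strategy {n : ℕ} : ∀ {t : ℕ} {ξ : Hist Ωs t → ℝ}
    {φ ψ : ∀ t, Hist Ωs t → Evec d}, Adm q S n t ξ φ → (∀ s, t ≤ s → φ s = ψ s) →
    Adm q S n t ξ ψ := by
  induction n with
  | zero => intro t ξ φ ψ h _; exact h
  | succ n ih =>
    intro t ξ φ ψ h hs
    have h' := ih (t := t + 1) h (fun s hts => hs s (by omega))
    rw [hs t le_rfl] at h'
    exact h'

/-- Choosing among countably many admissible continuations by an index known at time `t` gives an
admissible continuation. -/
lemma Adm.paste {n : ℕ} {φ : ℕ → ∀ t, Hist Ωs t → Evec d} {σ : ∀ s, Hist Ωs s → ℕ} :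
    ∀ {t : ℕ} {ξ : ℕ → Hist Ωs t → ℝ}, (∀ k, Adm q S n t (ξ k) (φ k)) →
    (∀ s, t ≤ s → ∀ ω : Hist Ωs (s + 1), σ (s + 1) ω = σ s ω.1) →
    Adm q S n t (fun ω => ξ (σ t ω) ω) (fun s ω => φ (σ s ω) s ω) := by
  induction n with
  | zero =>
    intro t ξ h _
    filter_upwards [ae_all_iff.2 (fun k => (show ∀ᵐ ω ∂Pmes q t, 0 ≤ ξ k ω from h k))] with ω hω
      using hω _
  | succ n ih =>
    intro t ξ h hσ
    have := ih (t := t + 1)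
      (ξ := fun k ω => ξ k ω.1 + ⟪φ k t ω.1, deltaS S t ω.1 ω.2⟫_ℝ) h
      (fun s hs => hσ s (by omega))
    simp only [hσ t le_rfl] at this
    exact this

lemma Adm.smul {n : ℕ} {c : ℝ} (hc : 0 ≤ c) {φ : ∀ t, Hist Ωs t → Evec d} :
    ∀ {t : ℕ} {ξ : Hist Ωs t → ℝ}, Adm q S n t ξ φ →
    Adm q S n t (fun ω => c * ξ ω) (fun s ω => c • φ s ω) := by
  induction n with
  | zero =>
    intro t ξ h
    filter_upwards [show ∀ᵐ ω ∂Pmes q t, 0 ≤ ξ ω from h] with ω hω using mul_nonneg hc hω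
  | succ n ih =>
    intro t ξ h
    have := ih (t := t + 1) h
    simp only [mul_add, ← real_inner_smul_left] at this
    exact this

lemma adm_zero {n : ℕ} : ∀ {t : ℕ} {ξ : Hist Ωs t → ℝ}, (∀ᵐ ω ∂Pmes q t, 0 ≤ ξ ω) →
    Adm q S n t ξ (fun _ _ => 0) := by
  induction n with
  | zero => intro t ξ h; exact h
  | succ n ih =>
    intro t ξ h
    refine ih (t := t + 1) ?_
    simpa using (ae_succ_fst_iff q).2 h

lemma adm_Vval_iff {n : ℕ} {φ : ∀ t, Hist Ωs t → Evec d} {x : ℝ} : ∀ {t T : ℕ}, t + n = T →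
    (Adm q S n t (Vval S φ x t) φ ↔ ∀ᵐ ω ∂Pmes q T, 0 ≤ Vval S φ x T ω) := by
  induction n with
  | zero => intro t T h; subst h; exact Iff.rfl
  | succ n ih =>
    intro t T h
    exact ih (t := t + 1) (by omega)

/-! ### Conditional value of a continuation -/

variable (q S)

/-- `Jv F φ n t h ω x`: the conditional expectation, given the history `ω ∈ Ω^t`, of the payoff
`F` evaluated at the terminal wealth obtained from capital `x` at time `t` by following `φ`. -/
def Jv {T : ℕ} (F : Hist Ωs T → ℝ → EReal) (φ : ∀ t, Hist Ωs t → Evec d) :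
    ∀ (n t : ℕ), t + n = T → Hist Ωs t → ℝ → EReal
  | 0, _, h => fun ω x => F (h ▸ ω) x
  | n + 1, t, h => fun ω x => geint (q t ω) fun y =>
      Jv F φ n (t + 1) (by omega) (hcons ω y) (x + ⟪φ t ω, deltaS S t ω y⟫_ℝ)

variable {T : ℕ} {F : Hist Ωs T → ℝ → EReal}

lemma Jv_mono_payoff {F F' : Hist Ωs T → ℝ → EReal} (hF : ∀ ω x, F ω x ≤ F' ω x)
    (φ : ∀ t, Hist Ωs t → Evec d) (n : ℕ) : ∀ (t : ℕ) (h : t + n = T) (ω : Hist Ωs t) (x : ℝ),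
    Jv q S F φ n t h ω x ≤ Jv q S F' φ n t h ω x := by
  induction n with
  | zero => intro t h ω x; exact hF _ _
  | succ n ih =>
    intro t h ω x
    exact geint_mono_ae (Eventually.of_forall fun y => ih _ _ _ _)

lemma Jv_monotone (hF : ∀ ω, Monotone (F ω)) (φ : ∀ t, Hist Ωs t → Evec d) (n : ℕ) :
    ∀ (t : ℕ) (h : t + n = T) (ω : Hist Ωs t), Monotone (Jv q S F φ n t h ω) := by
  induction n with
  | zero => intro t h ω; exact hF _
  | succ n ih =>
    intro t h ω x x' hx
    exact geint_mono_ae (Eventually.of_forall fun y => ih _ _ _ (by linarith))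

lemma Jv_congr_strategy {φ ψ : ∀ t, Hist Ωs t → Evec d} (n : ℕ) :
    ∀ (t : ℕ) (h : t + n = T), (∀ s, t ≤ s → φ s = ψ s) →
    Jv q S F φ n t h = Jv q S F ψ n t h := by
  induction n with
  | zero => intro t h _; rfl
  | succ n ih =>
    intro t h hs
    funext ω x
    change geint _ _ = geint _ _
    rw [ih (t + 1) (by omega) (fun s hts => hs s (by omega)), hs t le_rfl]

lemma Jv_paste {φ : ℕ → ∀ t, Hist Ωs t → Evec d} {σ : ∀ s, Hist Ωs s → ℕ} (n : ℕ) :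
    ∀ (t : ℕ) (h : t + n = T),
    (∀ s, t ≤ s → ∀ ω : Hist Ωs (s + 1), σ (s + 1) ω = σ s ω.1) → ∀ ω x,
    Jv q S F (fun s ω => φ (σ s ω) s ω) n t h ω x = Jv q S F (φ (σ t ω)) n t h ω x := by
  induction n with
  | zero => intro t h _ ω x; rfl
  | succ n ih =>
    intro t h hσ ω x
    change geint _ _ = geint _ _
    congr 1
    funext y
    rw [ih (t + 1) (by omega) (fun s hts => hσ s (by omega)), hσ t le_rfl, hcons_fst]

lemma Jv_smul (c : ℝ) (φ : ∀ t, Hist Ωs t → Evec d) (n : ℕ) :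
    ∀ (t : ℕ) (h : t + n = T) (ω : Hist Ωs t) (x : ℝ),
    Jv q S (fun ω x => F ω (c * x)) φ n t h ω x =
      Jv q S F (fun s ω => c • φ s ω) n t h ω (c * x) := by
  induction n with
  | zero => intro t h ω x; rfl
  | succ n ih =>
    intro t h ω x
    change geint _ _ = geint _ _
    congr 1
    funext y
    rw [ih, mul_add, real_inner_smul_left]

variable {q S}

lemma measurable_geint_kernel {α β : Type*} [MeasurableSpace α] [MeasurableSpace β]
    (κ : Kernel α β) [IsSFiniteKernel κ] {f : α × β → EReal} (hf : Measurable f) :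
    Measurable fun a => geint (κ a) fun b => f (a, b) := by
  have h1 : Measurable fun a => ∫⁻ b, ePos (f (a, b)) ∂κ a :=
    (measurable_ePos.comp hf).lintegral_kernel_prod_right'
  have h2 : Measurable fun a => ∫⁻ b, ePos (-f (a, b)) ∂κ a :=
    (measurable_ePos.comp hf.neg).lintegral_kernel_prod_right'
  exact h1.coe_ereal_ennreal.sub h2.coe_ereal_ennreal

lemma measurable_Jv (hS : ∀ t, Measurable (S t)) (hF : Measurable (Function.uncurry F))
    {φ : ∀ t, Hist Ωs t → Evec d} (hφ : ∀ t, Measurable (φ t)) (n : ℕ) :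
    ∀ (t : ℕ) (h : t + n = T), Measurable (Function.uncurry (Jv q S F φ n t h)) := by
  induction n with
  | zero => intro t h; subst h; exact hF
  | succ n ih =>
    intro t h
    have hd := measurable_deltaS S hS t
    have h1 : Measurable fun p : (Hist Ωs t × ℝ) × Ωs (t + 1) =>
        (((p.1.1, p.2) : Hist Ωs t × Ωs (t + 1)),
          p.1.2 + ⟪φ t p.1.1, deltaS S t p.1.1 p.2⟫_ℝ) := by
      have h3 : Measurable fun p : (Hist Ωs t × ℝ) × Ωs (t + 1) =>
          ((p.1.1, p.2) : Hist Ωs t × Ωs (t + 1)) := by fun_prop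
      refine h3.prodMk (Measurable.add (by fun_prop) ?_)
      exact ((hφ t).comp (by fun_prop)).inner (hd.comp h3)
    have h2 := (ih (t + 1) (by omega)).comp h1
    exact measurable_geint_kernel ((q t).comap Prod.fst measurable_fst) h2

lemma measurable_Vval (hS : ∀ t, Measurable (S t)) {φ : ∀ t, Hist Ωs t → Evec d}
    (hφ : ∀ t, Measurable (φ t)) (x : ℝ) : ∀ t, Measurable (Vval S φ x t)
  | 0 => measurable_const
  | t + 1 => by
    have hd := measurable_deltaS S hS t
    exact ((measurable_Vval hS hφ x t).comp (measurable_hist_fst t)).add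
      (((hφ t).comp (measurable_hist_fst t)).inner hd)

lemma lintegral_ePos_Jv_le (hS : ∀ t, Measurable (S t)) (hF : Measurable (Function.uncurry F))
    {φ : ∀ t, Hist Ωs t → Evec d} (hφ : ∀ t, Measurable (φ t)) (x : ℝ) (n : ℕ) :
    ∀ (t : ℕ) (h : t + n = T), ∫⁻ ω, ePos (Jv q S F φ n t h ω (Vval S φ x t ω)) ∂Pmes q t ≤
      ∫⁻ ω, ePos (F ω (Vval S φ x T ω)) ∂Pmes q T := by
  induction n with
  | zero => intro t h; subst h; exact le_rfl
  | succ n ih =>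
    intro t h
    refine le_trans ?_ (ih (t + 1) (by omega))
    rw [lintegral_succ q]
    · exact lintegral_mono fun ω => ePos_geint_le _
    · exact measurable_ePos.comp ((measurable_Jv hS hF hφ n (t + 1) (by omega)).comp
        (measurable_id.prodMk (measurable_Vval hS hφ x (t + 1))))

/-- Tower property: if its positive part is integrable, the expected payoff is the expectation
of the conditional value at any earlier time. -/
lemma geint_Jv (hS : ∀ t, Measurable (S t)) (hF : Measurable (Function.uncurry F))
    {φ : ∀ t, Hist Ωs t → Evec d} (hφ : ∀ t, Measurable (φ t)) (x : ℝ)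
    (hfin : ∫⁻ ω, ePos (F ω (Vval S φ x T ω)) ∂Pmes q T < ⊤) (n : ℕ) :
    ∀ (t : ℕ) (h : t + n = T),
      geint (Pmes q T) (fun ω => F ω (Vval S φ x T ω)) =
      geint (Pmes q t) (fun ω => Jv q S F φ n t h ω (Vval S φ x t ω)) := by
  induction n with
  | zero => intro t h; subst h; rfl
  | succ n ih =>
    intro t h
    rw [ih (t + 1) (by omega), geint_succ q]
    · rfl
    · exact (measurable_Jv hS hF hφ n (t + 1) (by omega)).comp
        (measurable_id.prodMk (measurable_Vval hS hφ x (t + 1)))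
    · exact (lintegral_ePos_Jv_le hS hF hφ x n (t + 1) (by omega)).trans_lt hfin

/-- A monotone upper semicontinuous function is right-continuous, hence determined by its values
at the rationals; this gives joint measurability of the payoff. -/
lemma measurable_uncurry_payoff {Ω : Type*} [MeasurableSpace Ω] {F : Ω → ℝ → EReal}
    (hm : ∀ x, Measurable fun ω => F ω x) (hmono : ∀ ω, Monotone (F ω))
    (husc : ∀ ω, UpperSemicontinuous (F ω)) : Measurable (Function.uncurry F) := by
  have h : Function.uncurry F = fun p : Ω × ℝ => ⨅ r : ℚ, if p.2 < r then F p.1 r else ⊤ := by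
    funext ⟨ω, x⟩
    apply le_antisymm
    · refine le_iInf fun r => ?_
      split_ifs with hr
      · exact hmono ω (le_of_lt hr)
      · exact le_top
    · refine le_of_forall_gt fun c hc => ?_
      have h1 : ∀ᶠ y in 𝓝 x, F ω y < c := husc ω x c hc
      obtain ⟨ε, hε, h2⟩ := Metric.eventually_nhds_iff.1 h1
      obtain ⟨r, hr1, hr2⟩ := exists_rat_btwn (show x < x + ε by linarith)
      refine (iInf_le _ r).trans_lt ?_
      rw [if_pos hr1]
      refine h2 ?_
      rw [Real.dist_eq, abs_lt]
      constructor <;> linarith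
  rw [h]
  refine Measurable.iInf fun r => ?_
  exact Measurable.ite (measurableSet_lt measurable_snd measurable_const)
    ((hm r).comp measurable_fst) measurable_const

end Model

/-! ### Consequences of no-arbitrage -/

section NoArbitrage

set_option linter.unusedSectionVars false

variable {q : ∀ t, Kernel (Hist Ωs t) (Ωs (t + 1))} [∀ t, IsMarkovKernel (q t)]
  {S : ∀ t, Hist Ωs t → Evec d} {T : ℕ}

lemma Vval_eq_const (S : ∀ t, Hist Ωs t → Evec d) {φ : ∀ t, Hist Ωs t → Evec d} (x : ℝ) :
    ∀ t, (∀ s, s < t → ∀ ω, φ s ω = 0) → ∀ ω, Vval S φ x t ω = x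
  | 0, _, _ => rfl
  | t + 1, h, ω => by
    change Vval S φ x t ω.1 + ⟪φ t ω.1, deltaS S t ω.1 ω.2⟫_ℝ = x
    rw [Vval_eq_const S x t (fun s hs => h s (by omega)), h t (by omega), inner_zero_left,
      add_zero]

/-- When trading stops at time `t`, the wealth has the same almost sure properties at time `t` and at
all later times. -/
lemma ae_Vval_iff (p : ℝ → Prop) {φ : ∀ t, Hist Ωs t → Evec d} (x : ℝ) {t : ℕ}
    (h : ∀ s, t ≤ s → ∀ ω, φ s ω = 0) : ∀ s, t ≤ s →
    ((∀ᵐ ω ∂Pmes q s, p (Vval S φ x s ω)) ↔ ∀ᵐ ω ∂Pmes q t, p (Vval S φ x t ω)) := by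
  intro s hs
  induction s, hs using Nat.le_induction with
  | base => rfl
  | succ s hs ih =>
    rw [← ih, ← ae_succ_fst_iff q (p := fun ω => p (Vval S φ x s ω))]
    have : ∀ ω : Hist Ωs (s + 1), Vval S φ x (s + 1) ω = Vval S φ x s ω.1 := fun ω => by
      change Vval S φ x s ω.1 + ⟪φ s ω.1, deltaS S s ω.1 ω.2⟫_ℝ = _
      rw [h s hs, inner_zero_left, add_zero]
    simp only [this]

/-- (NA) rules out arbitrage in every single period. -/
lemma one_step_NA (hNA : NAcond q S T) {t : ℕ} (ht : t < T) {g : Hist Ωs t → Evec d}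
    (hg : Measurable g) (h : ∀ᵐ ω ∂Pmes q (t + 1), 0 ≤ ⟪g ω.1, deltaS S t ω.1 ω.2⟫_ℝ) :
    ∀ᵐ ω ∂Pmes q (t + 1), ⟪g ω.1, deltaS S t ω.1 ω.2⟫_ℝ = 0 := by
  let φ : ∀ t, Hist Ωs t → Evec d := Function.update (fun _ _ => 0) t g
  have hφt : φ t = g := Function.update_self _ _ _
  have hφn : ∀ s, s ≠ t → φ s = fun _ => 0 := fun s hs => Function.update_of_ne hs _ _
  have hφm : ∀ s, Measurable (φ s) := fun s => by
    by_cases hs : s = t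
    · subst hs; rw [hφt]; exact hg
    · rw [hφn s hs]; exact measurable_const
  have hV : ∀ ω : Hist Ωs (t + 1),
      Vval S φ 0 (t + 1) ω = ⟪g ω.1, deltaS S t ω.1 ω.2⟫_ℝ := fun ω => by
    change Vval S φ 0 t ω.1 + ⟪φ t ω.1, deltaS S t ω.1 ω.2⟫_ℝ = _
    rw [Vval_eq_const S 0 t (fun s hs ω => by rw [hφn s (by omega)]), hφt, zero_add]
  have hz : ∀ s, t + 1 ≤ s → ∀ ω, φ s ω = 0 := fun s hs ω => by rw [hφn s (by omega)]
  have h1 := (ae_Vval_iff (q := q) (S := S) (fun v => 0 ≤ v) 0 hz T ht).2 (by simpa only [hV] using h)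
  have h2 := (ae_Vval_iff (q := q) (S := S) (fun v => v = 0) 0 hz T ht).1 (hNA φ hφm h1)
  simpa only [hV] using h2

/-- Under (NA), a capital from which nonnegative terminal wealth can be reached is nonnegative:
otherwise the portfolio restricted to the event of negative capital is an arbitrage. -/
lemma Adm.nonneg (hNA : NAcond q S T) {φ : ∀ t, Hist Ωs t → Evec d}
    (hφ : ∀ t, Measurable (φ t)) (hS : ∀ t, Measurable (S t)) {n : ℕ} :
    ∀ {t : ℕ} {ξ : Hist Ωs t → ℝ}, Measurable ξ → t + n = T → Adm q S n t ξ φ →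
    ∀ᵐ ω ∂Pmes q t, 0 ≤ ξ ω := by
  induction n with
  | zero => intro t ξ _ _ h; exact h
  | succ n ih =>
    intro t ξ hξ ht h
    have h1 : ∀ᵐ ω ∂Pmes q (t + 1), 0 ≤ ξ ω.1 + ⟪φ t ω.1, deltaS S t ω.1 ω.2⟫_ℝ :=
      ih (t := t + 1) ((hξ.comp (measurable_hist_fst t)).add
      (((hφ t).comp (measurable_hist_fst t)).inner (measurable_deltaS S hS t))) (by omega) h
    have hB : MeasurableSet {ω | ξ ω < 0} := measurableSet_lt hξ measurable_const
    have h2 := one_step_NA hNA (t := t) (by omega) (g := {ω | ξ ω < 0}.indicator (φ t))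
      ((hφ t).indicator hB) (by
        filter_upwards [h1] with ω hω
        by_cases hb : ξ ω.1 < 0
        · rw [indicator_of_mem (show ω.1 ∈ {ω | ξ ω < 0} from hb)]
          linarith
        · rw [indicator_of_notMem (show ω.1 ∉ {ω | ξ ω < 0} from hb), inner_zero_left])
    rw [← ae_succ_fst_iff q]
    filter_upwards [h1, h2] with ω hω1 hω2
    by_contra hb
    rw [not_le] at hb
    rw [indicator_of_mem (show ω.1 ∈ {ω | ξ ω < 0} from hb)] at hω2
    linarith

lemma measurableSet_ae_kernel {α β : Type*} [MeasurableSpace α] [MeasurableSpace β]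
    (κ : Kernel α β) [IsSFiniteKernel κ] {p : α × β → Prop} (hp : MeasurableSet {x | p x}) :
    MeasurableSet {a | ∀ᵐ b ∂κ a, p (a, b)} :=
  (Kernel.measurable_kernel_prodMk_left (κ := κ) hp.compl) (measurableSet_singleton 0)

lemma ae_mem_suppK (hS : ∀ t, Measurable (S t)) (t : ℕ) (ω : Hist Ωs t) :
    ∀ᵐ y ∂q t ω, deltaS S t ω y ∈ suppK q S t ω := by
  have hm : Measurable (deltaS S t ω) :=
    (measurable_deltaS S hS t).comp (measurable_const.prodMk measurable_id)
  have h1 : (((q t ω).map (deltaS S t ω)).support) ⊆ suppK q S t ω := by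
    rintro x hx A ⟨hA, hA1⟩
    refine Measure.support_subset_of_isClosed hA ?_ hx
    have h2 : ∀ᵐ y ∂q t ω, deltaS S t ω y ∈ A :=
      (prob_compl_eq_zero_iff (hm hA.measurableSet)).2 hA1
    exact (ae_map_iff hm.aemeasurable hA.measurableSet).2 h2
  have h3 : ∀ᵐ v ∂((q t ω).map (deltaS S t ω)), v ∈ suppK q S t ω :=
    mem_of_superset Measure.support_mem_ae h1
  exact ae_of_ae_map hm.aemeasurable h3

/-- If the affine hull of the support misses the origin, some portfolio has the constant
payoff `1`. -/
lemma exists_inner_eq_one (hS : ∀ t, Measurable (S t)) (t : ℕ) (ω : Hist Ωs t)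
    (h0 : (0 : Evec d) ∉ Dset q S t ω) :
    ∃ p : Evec d, ∀ᵐ y ∂q t ω, ⟪p, deltaS S t ω y⟫_ℝ = 1 := by
  have hsupp := ae_mem_suppK (q := q) hS t ω
  obtain ⟨y0, hy0⟩ := hsupp.exists
  set A := affineSpan ℝ (suppK q S t ω) with hA
  set x0 := deltaS S t ω y0
  have hx0 : x0 ∈ A := subset_affineSpan ℝ _ hy0
  let M := A.direction
  let p := x0 - M.starProjection x0
  have hpM : ∀ m ∈ M, ⟪p, m⟫_ℝ = 0 := fun m hm =>
    Submodule.starProjection_inner_eq_zero x0 m hm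
  have hp0 : p ≠ 0 := by
    intro hp
    have hx0M : x0 ∈ M := by
      rw [sub_eq_zero.1 hp]
      exact Submodule.starProjection_apply_mem M x0
    apply h0
    have := AffineSubspace.vadd_mem_of_mem_direction (M.neg_mem hx0M) hx0
    rw [vadd_eq_add, neg_add_cancel] at this
    exact this
  have hpx : ⟪p, x0⟫_ℝ = ‖p‖ ^ 2 := by
    have h1 : x0 = p + M.starProjection x0 := by simp [p]
    conv_lhs => rw [h1]
    rw [inner_add_right, hpM _ (Submodule.starProjection_apply_mem M x0), add_zero,
      real_inner_self_eq_norm_sq]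
  refine ⟨(‖p‖ ^ 2)⁻¹ • p, ?_⟩
  filter_upwards [hsupp] with y hy
  have hyA : deltaS S t ω y ∈ A := subset_affineSpan ℝ _ hy
  have h2 : deltaS S t ω y - x0 ∈ M := AffineSubspace.vsub_mem_direction hyA hx0
  have h3 : ⟪p, deltaS S t ω y⟫_ℝ = ‖p‖ ^ 2 := by
    have := hpM _ h2
    rw [inner_sub_right, hpx] at this
    linarith
  rw [real_inner_smul_left, h3]
  exact inv_mul_cancel₀ (by positivity)

lemma mem_Dset_of_zero_mem (hS : ∀ t, Measurable (S t)) (t : ℕ) (ω : Hist Ωs t)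
    (h0 : (0 : Evec d) ∈ Dset q S t ω) {v : Evec d}
    (hv : v ∈ (nullDir (q t ω) (deltaS S t ω))ᗮ) : v ∈ Dset q S t ω := by
  have hsupp := ae_mem_suppK (q := q) hS t ω
  set A := affineSpan ℝ (suppK q S t ω) with hA
  have hle : (A.direction)ᗮ ≤ nullDir (q t ω) (deltaS S t ω) := by
    intro g hg
    rw [mem_nullDir]
    filter_upwards [hsupp] with y hy
    have hyA : deltaS S t ω y ∈ A := subset_affineSpan ℝ _ hy
    have h2 : deltaS S t ω y - 0 ∈ A.direction := AffineSubspace.vsub_mem_direction hyA h0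
    rw [sub_zero] at h2
    exact Submodule.inner_left_of_mem_orthogonal h2 hg
  have hv' : v ∈ A.direction := by
    rw [← Submodule.orthogonal_orthogonal A.direction]
    exact Submodule.orthogonal_le hle hv
  have := AffineSubspace.vadd_mem_of_mem_direction hv' h0
  rw [vadd_eq_add, add_zero] at this
  exact this

/-- Under (NA) the affine hull `D` almost surely contains the orthogonal complement of the
redundant directions. -/
lemma ae_mem_Dset (hNA : NAcond q S T) (hS : ∀ t, Measurable (S t)) {t : ℕ} (ht : t < T) :
    ∀ᵐ ω ∂Pmes q t, ∀ v ∈ (nullDir (q t ω) (deltaS S t ω))ᗮ, v ∈ Dset q S t ω := by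
  obtain ⟨g, hg, hreg⟩ := exists_measurable_regression (q t) (measurable_deltaS S hS t)
    (r := fun _ => 1) measurable_const
  have hset : MeasurableSet {p : Hist Ωs t × Ωs (t + 1) | ⟪g p.1, deltaS S t p.1 p.2⟫_ℝ = 1} :=
    measurableSet_eq_fun ((hg.comp measurable_fst).inner (measurable_deltaS S hS t))
      measurable_const
  set B : Set (Hist Ωs t) := {ω | ∀ᵐ y ∂q t ω, ⟪g ω, deltaS S t ω y⟫_ℝ = 1} with hBdef
  have hB : MeasurableSet B := measurableSet_ae_kernel (q t) hset
  have hgB : Measurable (B.indicator g) := hg.indicator hB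
  have h1 : ∀ᵐ ω ∂Pmes q (t + 1), 0 ≤ ⟪B.indicator g ω.1, deltaS S t ω.1 ω.2⟫_ℝ := by
    refine ae_succ_of_ae_ae q ?_ (Eventually.of_forall fun ω => ?_)
    · exact measurableSet_le measurable_const
        ((hgB.comp (measurable_hist_fst t)).inner (measurable_deltaS S hS t))
    · simp only [hcons_fst, hcons_snd]
      by_cases hω : ω ∈ B
      · rw [indicator_of_mem hω]
        filter_upwards [show ∀ᵐ y ∂q t ω, ⟪g ω, deltaS S t ω y⟫_ℝ = 1 from hω] with y hy
        rw [hy]; exact zero_le_one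
      · rw [indicator_of_notMem hω]; simp
  have h2 := ae_ae_of_ae_succ q (one_step_NA hNA ht hgB h1)
  filter_upwards [h2] with ω hω v hv
  refine mem_Dset_of_zero_mem hS t ω ?_ hv
  by_contra h0
  have hωB : ω ∈ B := (hreg ω (exists_inner_eq_one hS t ω h0)).1
  obtain ⟨y, hy1, hy2⟩ := (hω.and (show ∀ᵐ y ∂q t ω, ⟪g ω, deltaS S t ω y⟫_ℝ = 1 from hωB)).exists
  simp only [hcons_fst, hcons_snd] at hy1
  rw [indicator_of_mem hωB, hy2] at hy1
  exact one_ne_zero hy1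

/-- Removing the redundant part of a portfolio, measurably and without changing its payoff. -/
lemma exists_projected_strategy (hS : ∀ t, Measurable (S t)) {t : ℕ} {h : Hist Ωs t → Evec d}
    (hh : Measurable h) : ∃ h' : Hist Ωs t → Evec d, Measurable h' ∧ ∀ ω,
      h' ω ∈ (nullDir (q t ω) (deltaS S t ω))ᗮ ∧
      ∀ᵐ y ∂q t ω, ⟪h' ω, deltaS S t ω y⟫_ℝ = ⟪h ω, deltaS S t ω y⟫_ℝ := by
  obtain ⟨g, hg, hreg⟩ := exists_measurable_regression (q t) (measurable_deltaS S hS t)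
    (r := fun p => ⟪h p.1, deltaS S t p.1 p.2⟫_ℝ)
    ((hh.comp measurable_fst).inner (measurable_deltaS S hS t))
  refine ⟨g, hg, fun ω => ?_⟩
  obtain ⟨h1, h2⟩ := hreg ω ⟨h ω, Eventually.of_forall fun y => rfl⟩
  exact ⟨h2, h1⟩

/-- Under (NA), admissible portfolios without redundant part are almost surely bounded as soon
as the capitals are. -/
lemma ae_bounded_strategies (hNA : NAcond q S T) {t : ℕ} (ht : t < T)
    {ξ : ℕ → Hist Ωs t → ℝ} {h : ℕ → Hist Ωs t → Evec d} (hh : ∀ k, Measurable (h k))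
    (hξ : ∀ᵐ ω ∂Pmes q t, ∃ R : ℝ, ∀ k, ξ k ω ≤ R)
    (hperp : ∀ k ω, h k ω ∈ (nullDir (q t ω) (deltaS S t ω))ᗮ)
    (hadm : ∀ k, ∀ᵐ ω ∂Pmes q (t + 1), 0 ≤ ξ k ω.1 + ⟪h k ω.1, deltaS S t ω.1 ω.2⟫_ℝ) :
    ∀ᵐ ω ∂Pmes q t, ∃ R : ℝ, ∀ k, ‖h k ω‖ ≤ R := by
  let z : ℕ → Hist Ωs t → EReal := fun k ω => ((‖h k ω‖ : ℝ) : EReal)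
  let v : ℕ → Hist Ωs t → Evec d := fun k ω => ‖h k ω‖⁻¹ • h k ω
  have hz : ∀ k, Measurable (z k) := fun k => (hh k).norm.coe_real_ereal
  have hv : ∀ k, Measurable (v k) := fun k => (hh k).norm.inv.smul (hh k)
  obtain ⟨τ, w, hτ, hw, hmono, hlim, hconv⟩ := exists_measurable_subseq hz hv
  have hvw : ∀ ω, Tendsto (fun j => v (τ j ω) ω) atTop (𝓝 (w ω)) := fun ω => by
    refine hconv ω ⟨1, fun k => ?_⟩
    simp only [v, norm_smul, norm_inv, norm_norm]
    exact inv_mul_le_one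
  set B : Set (Hist Ωs t) := {ω | limsup (fun k => z k ω) atTop = ⊤} with hBdef
  have hB : MeasurableSet B := (Measurable.limsup hz) (measurableSet_singleton ⊤)
  have hnorm : ∀ ω ∈ B, Tendsto (fun j => ‖h (τ j ω) ω‖) atTop atTop := fun ω hω => by
    have h1 := hlim ω
    rw [show limsup (fun k => z k ω) atTop = ⊤ from hω] at h1
    exact EReal.tendsto_coe_nhds_top_iff.1 h1
  have hw1 : ∀ ω ∈ B, ‖w ω‖ = 1 := fun ω hω => by
    refine tendsto_nhds_unique (hvw ω).norm (tendsto_const_nhds.congr' ?_)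
    filter_upwards [(hnorm ω hω).eventually_gt_atTop 0] with j hj
    simp only [v, norm_smul, norm_inv, norm_norm]
    exact (inv_mul_cancel₀ hj.ne').symm
  have hgB : Measurable (B.indicator w) := hw.indicator hB
  have h1 : ∀ᵐ ω ∂Pmes q (t + 1), 0 ≤ ⟪B.indicator w ω.1, deltaS S t ω.1 ω.2⟫_ℝ := by
    filter_upwards [ae_all_iff.2 hadm, (ae_succ_fst_iff q).2 hξ] with ω hω ⟨R, hR⟩
    by_cases hb : ω.1 ∈ B
    · rw [indicator_of_mem hb]
      have hl : Tendsto (fun j => ⟪v (τ j ω.1) ω.1, deltaS S t ω.1 ω.2⟫_ℝ) atTop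
          (𝓝 ⟪w ω.1, deltaS S t ω.1 ω.2⟫_ℝ) := (hvw ω.1).inner tendsto_const_nhds
      have hr : Tendsto (fun j => ‖h (τ j ω.1) ω.1‖⁻¹ * (-R)) atTop (𝓝 0) := by
        have := (tendsto_inv_atTop_zero.comp (hnorm ω.1 hb)).mul_const (-R)
        simpa using this
      refine le_of_tendsto_of_tendsto' hr hl fun j => ?_
      simp only [v, real_inner_smul_left]
      refine mul_le_mul_of_nonneg_left ?_ (inv_nonneg.2 (norm_nonneg _))
      linarith [hω (τ j ω.1), hR (τ j ω.1)]
    · rw [indicator_of_notMem hb, inner_zero_left]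
  have h2 := ae_ae_of_ae_succ q (one_step_NA hNA ht hgB h1)
  filter_upwards [h2] with ω hω
  have hωB : ω ∉ B := by
    intro hb
    have hnull : w ω ∈ nullDir (q t ω) (deltaS S t ω) := by
      rw [mem_nullDir]
      filter_upwards [hω] with y hy
      simp only [hcons_fst, hcons_snd] at hy
      rwa [indicator_of_mem hb] at hy
    have hpp : w ω ∈ (nullDir (q t ω) (deltaS S t ω))ᗮ := by
      refine (Submodule.isClosed_orthogonal _).mem_of_tendsto (hvw ω)
        (Eventually.of_forall fun j => ?_)
      exact Submodule.smul_mem _ _ (hperp _ _)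
    have h0 : ⟪w ω, w ω⟫_ℝ = 0 := Submodule.inner_right_of_mem_orthogonal hnull hpp
    rw [real_inner_self_eq_norm_sq, hw1 ω hb] at h0
    norm_num at h0
  have hlt : limsup (fun k => z k ω) atTop < ⊤ := lt_top_iff_ne_top.2 hωB
  obtain ⟨c, hc1, hc2⟩ := EReal.lt_iff_exists_real_btwn.1 hlt
  have hev : ∀ᶠ k in atTop, ‖h k ω‖ ≤ c := by
    filter_upwards [eventually_lt_of_limsup_lt hc1] with k hk
    exact (EReal.coe_lt_coe_iff.1 hk).le
  obtain ⟨N, hN⟩ := eventually_atTop.1 hev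
  refine ⟨c ⊔ ∑ i ∈ Finset.range N, ‖h i ω‖, fun k => ?_⟩
  by_cases hk : N ≤ k
  · exact (hN k hk).trans le_sup_left
  · exact (Finset.single_le_sum (f := fun i => ‖h i ω‖) (fun i _ => norm_nonneg _)
      (Finset.mem_range.2 (by omega))).trans le_sup_right

end NoArbitrage

/-! ### Payoffs and integrable domination -/

section Compactness

set_option linter.unusedSectionVars false

variable (q : ∀ t, Kernel (Hist Ωs t) (Ωs (t + 1))) [∀ t, IsMarkovKernel (q t)]
  (S : ∀ t, Hist Ωs t → Evec d) (T : ℕ)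

/-- The payoffs for which optimal continuations exist: measurable, nondecreasing, upper
semicontinuous, with integrable positive part at every multiple of the terminal wealth of an
admissible strategy of initial capital `1`. -/
structure Payoff (F : Hist Ωs T → ℝ → EReal) : Prop where
  meas : ∀ x, Measurable fun ω => F ω x
  mono : ∀ ω, Monotone (F ω)
  usc : ∀ ω, UpperSemicontinuous (F ω)
  int : ∀ m : ℕ, 0 < m → ∀ φ ∈ PhiX q S T 1,
    ∫⁻ ω, ePos (F ω (m * Vval S φ 1 T ω)) ∂Pmes q T < ⊤

/-- The closedness property proved by backward induction: along admissible pairs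
(capital, continuation) at time `t` whose capitals converge, the conditional values have their
limsup dominated by the value of some admissible continuation from the limit capital, and this
continuation takes its values in `D`. -/
def ClosedAt (n t : ℕ) (h : t + n = T) : Prop :=
  ∀ F, Payoff q S T F → ∀ (ξ : ℕ → Hist Ωs t → ℝ) (ξ' : Hist Ωs t → ℝ)
    (φ : ℕ → ∀ t, Hist Ωs t → Evec d), (∀ k, Measurable (ξ k)) → Measurable ξ' →
    (∀ k s, Measurable (φ k s)) →
    (∀ᵐ ω ∂Pmes q t, Tendsto (fun k => ξ k ω) atTop (𝓝 (ξ' ω))) →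
    (∀ k, Adm q S n t (ξ k) (φ k)) →
    ∃ ψ : ∀ t, Hist Ωs t → Evec d, (∀ s, Measurable (ψ s)) ∧ Adm q S n t ξ' ψ ∧
      (∀ᵐ ω ∂Pmes q t, limsup (fun k => Jv q S F (φ k) n t h ω (ξ k ω)) atTop ≤
        Jv q S F ψ n t h ω (ξ' ω)) ∧
      ∀ s, t ≤ s → s < T → ∀ᵐ ω ∂Pmes q s, ψ s ω ∈ Dset q S s ω

variable {q S T} {F : Hist Ωs T → ℝ → EReal}

lemma Payoff.uncurry (hF : Payoff q S T F) : Measurable (Function.uncurry F) :=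
  measurable_uncurry_payoff hF.meas hF.mono hF.usc

lemma Payoff.max_zero (hF : Payoff q S T F) : Payoff q S T fun ω x => max (F ω x) 0 where
  meas x := (hF.meas x).max measurable_const
  mono ω _ _ h := max_le_max (hF.mono ω h) le_rfl
  usc ω x c hc := by
    have hc1 : F ω x < c := lt_of_le_of_lt (le_max_left _ _) hc
    have hc2 : (0 : EReal) < c := lt_of_le_of_lt (le_max_right _ _) hc
    filter_upwards [hF.usc ω x c hc1] with y hy using max_lt hy hc2
  int m hm φ hφ := by simpa only [ePos_max_zero] using hF.int m hm φ hφ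

lemma closedAt_zero (t : ℕ) (h : t + 0 = T) : ClosedAt q S T 0 t h := by
  intro F hF ξ ξ' φ _ _ _ hlim hadm
  refine ⟨fun _ _ => 0, fun _ => measurable_const, ?_, ?_, fun s hs hsT => by omega⟩
  · change ∀ᵐ ω ∂Pmes q t, 0 ≤ ξ' ω
    filter_upwards [hlim, ae_all_iff.2 (fun k => (show ∀ᵐ ω ∂Pmes q t, 0 ≤ ξ k ω from hadm k))]
      with ω h1 h2
    exact ge_of_tendsto' h1 h2
  · filter_upwards [hlim] with ω hω
    refine le_of_forall_gt fun c hc => ?_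
    obtain ⟨c', hc1, hc2⟩ := exists_between hc
    refine lt_of_le_of_lt ?_ hc2
    refine limsup_le_of_le (h := ?_)
    filter_upwards [hω.eventually (hF.usc (h ▸ ω) (ξ' ω) c' hc1)] with k hk using hk.le

/-- A single continuation from capital `W` dominates the values of countably many continuations
whenever their capital is at most `W`. -/
lemma exists_dominating_continuation {n t : ℕ} {h : t + n = T} (IH : ClosedAt q S T n t h)
    (hF : Payoff q S T F) {W : Hist Ωs t → ℝ} (hW : Measurable W)
    (hW0 : ∀ᵐ ω ∂Pmes q t, 0 ≤ W ω) {χ : ℕ → Hist Ωs t → ℝ} (hχ : ∀ j, Measurable (χ j))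
    {φ : ℕ → ∀ t, Hist Ωs t → Evec d} (hφ : ∀ k s, Measurable (φ k s))
    (hadm : ∀ j, Adm q S n t (χ j) (φ j)) :
    ∃ ψ : ∀ t, Hist Ωs t → Evec d, (∀ s, Measurable (ψ s)) ∧ Adm q S n t W ψ ∧
      ∀ᵐ ω ∂Pmes q t, ∀ j, χ j ω ≤ W ω →
        Jv q S F (φ j) n t h ω (χ j ω) ≤ Jv q S F ψ n t h ω (W ω) := by
  classical
  -- `θ j` follows `φ j` where its capital is at most `W`, and invests nothing elsewhere
  have key : ∀ j, ∃ θ : ∀ t, Hist Ωs t → Evec d, (∀ s, Measurable (θ s)) ∧ Adm q S n t W θ ∧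
      ∀ ω, χ j ω ≤ W ω → Jv q S F (φ j) n t h ω (W ω) = Jv q S F θ n t h ω (W ω) := by
    intro j
    obtain ⟨σ, hσm, hσt, hσ⟩ := exists_index_extension
      (τ := fun ω => if χ j ω ≤ W ω then 1 else 0)
      (Measurable.ite (measurableSet_le (hχ j) hW) measurable_const measurable_const)
    let f : ℕ → ∀ t, Hist Ωs t → Evec d := fun k => if k = 0 then fun _ _ => 0 else φ j
    let c : ℕ → Hist Ωs t → ℝ := fun k => if k = 0 then W else fun ω => max (W ω) (χ j ω)
    have hf : ∀ k s, Measurable (f k s) := fun k s => by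
      by_cases hk : k = 0
      · simp only [f, if_pos hk]; exact measurable_const
      · simp only [f, if_neg hk]; exact hφ j s
    have hfc : ∀ k, Adm q S n t (c k) (f k) := fun k => by
      by_cases hk : k = 0
      · simp only [f, c, if_pos hk]; exact adm_zero hW0
      · simp only [f, c, if_neg hk]
        exact (hadm j).mono (Eventually.of_forall fun ω => le_max_right _ _)
    refine ⟨fun s ω => f (σ s ω) s ω, fun s => measurable_comp_index (fun k => hf k s) (hσm s),
      (Adm.paste hfc hσ).mono (Eventually.of_forall fun ω => ?_), fun ω hω => ?_⟩
    · rw [hσt]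
      by_cases hω : χ j ω ≤ W ω
      · simp [c, hω]
      · simp [c, hω]
    · rw [Jv_paste q S n t h hσ, hσt]
      simp [f, hω]
  choose θ hθm hθa hθ using key
  obtain ⟨ψ, hψm, hψa, hψ, -⟩ := IH F hF (fun _ => W) W (fun k => θ (Nat.unpair k).1)
    (fun _ => hW) hW (fun k => hθm _) (Eventually.of_forall fun ω => tendsto_const_nhds)
    (fun k => hθa _)
  refine ⟨ψ, hψm, hψa, ?_⟩
  filter_upwards [hψ] with ω hω j hj
  refine (Jv_monotone q S hF.mono (φ j) n t h ω hj).trans ?_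
  rw [hθ j ω hj]
  refine le_trans ?_ hω
  -- every index `j` occurs infinitely often as the first component of `Nat.unpair k`
  refine le_limsup_of_frequently_le (frequently_atTop.2 fun N => ⟨Nat.pair j N, ?_, ?_⟩)
  · exact Nat.right_le_pair j N
  · simp

/-- Values of continuations from the capital `M (1 + ⟪g, ΔS⟫)` are integrable: up to the factor
`M`, such a capital is reached at time `t + 1` from initial capital `1`. -/
lemma lintegral_Jv_lt_top (hS : ∀ t, Measurable (S t)) {n t : ℕ} (h : t + 1 + n = T)
    (hF : Payoff q S T F) {g : Hist Ωs t → Evec d} (hg : Measurable g) {M : ℕ} (hM : 0 < M)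
    {ψ : ∀ t, Hist Ωs t → Evec d} (hψ : ∀ s, Measurable (ψ s))
    (hadm : Adm q S n (t + 1)
      (fun ω => M * (1 + ⟪g ω.1, deltaS S t ω.1 ω.2⟫_ℝ)) ψ) :
    ∫⁻ ω, ePos (Jv q S F ψ n (t + 1) h ω (M * (1 + ⟪g ω.1, deltaS S t ω.1 ω.2⟫_ℝ)))
      ∂Pmes q (t + 1) < ⊤ := by
  have hM' : (M : ℝ) ≠ 0 := by positivity
  let θ : ∀ t, Hist Ωs t → Evec d :=
    Function.update (fun s ω => if s < t then 0 else (M : ℝ)⁻¹ • ψ s ω) t g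
  have hθt : θ t = g := Function.update_self _ _ _
  have hθn : ∀ s, s ≠ t → θ s = fun ω => if s < t then 0 else (M : ℝ)⁻¹ • ψ s ω :=
    fun s hs => Function.update_of_ne hs _ _
  have hθlt : ∀ s, s < t → ∀ ω, θ s ω = 0 := fun s hs ω => by
    rw [hθn s (by omega)]
    exact if_pos hs
  have hθgt : ∀ s, t + 1 ≤ s → θ s = fun ω => (M : ℝ)⁻¹ • ψ s ω := fun s hs => by
    rw [hθn s (by omega)]
    funext ω
    rw [if_neg (by omega)]
  have hθm : ∀ s, Measurable (θ s) := fun s => by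
    rcases lt_trichotomy s t with hs | hs | hs
    · rw [funext (hθlt s hs)]; exact measurable_const
    · subst hs; rw [hθt]; exact hg
    · rw [hθgt s hs]; exact (hψ s).const_smul (M : ℝ)⁻¹
  have hV : Vval S θ 1 (t + 1) = fun ω => 1 + ⟪g ω.1, deltaS S t ω.1 ω.2⟫_ℝ := by
    funext ω
    change Vval S θ 1 t ω.1 + ⟪θ t ω.1, deltaS S t ω.1 ω.2⟫_ℝ = _
    rw [Vval_eq_const S 1 t hθlt, hθt]
  have hθa : Adm q S n (t + 1) (Vval S θ 1 (t + 1)) θ := by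
    have h1 := hadm.smul (c := (M : ℝ)⁻¹) (by positivity)
    have h2 := h1.congr_strategy (ψ := θ) (fun s hs => (hθgt s hs).symm)
    rw [hV]
    simpa only [inv_mul_cancel_left₀ hM'] using h2
  have hmem : θ ∈ PhiX q S T 1 := ⟨hθm, (adm_Vval_iff h).1 hθa⟩
  have hFM : Measurable (Function.uncurry fun (ω : Hist Ωs T) (x : ℝ) => F ω (M * x)) :=
    hF.uncurry.comp (measurable_fst.prodMk (measurable_snd.const_mul (M : ℝ)))
  refine lt_of_le_of_lt (le_of_eq ?_)
    ((lintegral_ePos_Jv_le hS hFM hθm 1 n (t + 1) h).trans_lt (hF.int M hM θ hmem))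
  refine lintegral_congr fun ω => ?_
  rw [Jv_smul, hV, Jv_congr_strategy q S n (t + 1) h
    (φ := fun s ω => (M : ℝ) • θ s ω) (ψ := ψ) (fun s hs => ?_)]
  funext ω
  rw [hθgt s hs, smul_inv_smul₀ hM']

/-- Integrable domination of the one-step conditional values of a sequence of admissible
continuations with bounded capitals and portfolios. -/
lemma ae_exists_dominating (hNA : NAcond q S T) (hS : ∀ t, Measurable (S t)) {n t : ℕ}
    {h : t + 1 + n = T} (IH : ClosedAt q S T n (t + 1) h) (hF : Payoff q S T F)
    {ξ : ℕ → Hist Ωs t → ℝ} (hξ : ∀ j, Measurable (ξ j)) {g : ℕ → Hist Ωs t → Evec d}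
    (hg : ∀ j, Measurable (g j)) {φ : ℕ → ∀ t, Hist Ωs t → Evec d}
    (hφ : ∀ k s, Measurable (φ k s))
    (hadm : ∀ j, Adm q S n (t + 1) (fun ω => ξ j ω.1 + ⟪g j ω.1, deltaS S t ω.1 ω.2⟫_ℝ) (φ j))
    (hξ0 : ∀ j, ∀ᵐ ω ∂Pmes q t, 0 ≤ ξ j ω)
    (hbd : ∀ᵐ ω ∂Pmes q t, ∃ R : ℝ, ∀ j, |ξ j ω| ≤ R ∧ ‖g j ω‖ ≤ R) :
    ∀ᵐ ω ∂Pmes q t, ∃ Y : Ωs (t + 1) → ℝ≥0∞, ∫⁻ y, Y y ∂q t ω < ⊤ ∧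
      ∀ j, ∀ᵐ y ∂q t ω, ePos (Jv q S F (φ j) n (t + 1) h (hcons ω y)
        (ξ j ω + ⟪g j ω, deltaS S t ω y⟫_ℝ)) ≤ Y y := by
  let χ : ℕ → Hist Ωs (t + 1) → ℝ := fun j ω => ξ j ω.1 + ⟪g j ω.1, deltaS S t ω.1 ω.2⟫_ℝ
  have hfst := measurable_hist_fst (Ωs := Ωs) t
  have hχ : ∀ j, Measurable (χ j) := fun j =>
    ((hξ j).comp hfst).add (((hg j).comp hfst).inner (measurable_deltaS S hS t))
  have hχ0 : ∀ᵐ ω ∂Pmes q (t + 1), ∀ j, 0 ≤ χ j ω := ae_all_iff.2 fun j =>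
    Adm.nonneg hNA (hφ j) hS (hχ j) h (hadm j)
  have hξ0' := ae_all_iff.2 hξ0
  let c : ℕ → Hist Ωs t → ℝ := fun N ω => 1 + ∑ i ∈ Finset.range N, ξ i ω
  let G : ℕ → Hist Ωs t → Evec d := fun N ω => (c N ω)⁻¹ • ∑ i ∈ Finset.range N, g i ω
  have hGm : ∀ N, Measurable (G N) := fun N =>
    (measurable_const.add (Finset.measurable_fun_sum _ fun i _ => hξ i)).inv.smul
      (Finset.measurable_fun_sum _ fun i _ => hg i)
  -- the total capital `1 + ∑ ξ i` invested in `∑ g i`, normalised to the capital `1`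
  let w : ℕ → Hist Ωs (t + 1) → ℝ := fun N ω => 1 + ⟪G N ω.1, deltaS S t ω.1 ω.2⟫_ℝ
  have hwm : ∀ N, Measurable (w N) := fun N =>
    measurable_const.add (((hGm N).comp hfst).inner (measurable_deltaS S hS t))
  have hcw : ∀ ω : Hist Ωs (t + 1), (∀ j, 0 ≤ ξ j ω.1) → ∀ N, 1 ≤ c N ω.1 ∧
      c N ω.1 * w N ω = 1 + ∑ i ∈ Finset.range N, χ i ω := fun ω hω N => by
    have h1 : 1 ≤ c N ω.1 := le_add_of_nonneg_right (Finset.sum_nonneg fun i _ => hω i)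
    refine ⟨h1, ?_⟩
    simp only [w, G, χ, real_inner_smul_left, mul_add, Finset.sum_add_distrib, mul_one]
    rw [mul_inv_cancel_left₀ (by linarith), sum_inner]
    simp only [c]
    ring
  have hw0 : ∀ᵐ ω ∂Pmes q (t + 1), ∀ N, 0 ≤ w N ω := by
    filter_upwards [hχ0, (ae_succ_fst_iff q).2 hξ0'] with ω h1 h2 N
    obtain ⟨h3, h4⟩ := hcw ω h2 N
    have h5 : 0 ≤ c N ω.1 * w N ω := by
      rw [h4]
      have := Finset.sum_nonneg (s := Finset.range N) fun i _ => h1 i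
      linarith
    exact nonneg_of_mul_nonneg_right h5 (by linarith)
  have hex : ∀ p : ℕ × ℕ, ∃ ψ : ∀ t, Hist Ωs t → Evec d, (∀ s, Measurable (ψ s)) ∧
      Adm q S n (t + 1) (fun ω => ((p.1 + 1 : ℕ) : ℝ) * w p.2 ω) ψ ∧
      ∀ᵐ ω ∂Pmes q (t + 1), ∀ j, χ j ω ≤ ((p.1 + 1 : ℕ) : ℝ) * w p.2 ω →
        Jv q S (fun ω x => max (F ω x) 0) (φ j) n (t + 1) h ω (χ j ω) ≤
        Jv q S (fun ω x => max (F ω x) 0) ψ n (t + 1) h ω (((p.1 + 1 : ℕ) : ℝ) * w p.2 ω) :=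
    fun p => exists_dominating_continuation IH hF.max_zero
      ((hwm p.2).const_mul _)
      (by filter_upwards [hw0] with ω hω using mul_nonneg (Nat.cast_nonneg _) (hω p.2))
      hχ hφ hadm
  choose ψ hψm hψa hψ using hex
  let Z : ℕ × ℕ → Hist Ωs (t + 1) → ℝ≥0∞ := fun p ω =>
    ePos (Jv q S (fun ω x => max (F ω x) 0) (ψ p) n (t + 1) h ω (((p.1 + 1 : ℕ) : ℝ) * w p.2 ω))
  have hZm : ∀ p, Measurable (Z p) := fun p =>
    measurable_ePos.comp ((measurable_Jv hS hF.max_zero.uncurry (hψm p) n (t + 1) h).comp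
      (measurable_id.prodMk ((hwm p.2).const_mul _)))
  have hZ : ∀ p, ∀ᵐ ω ∂Pmes q t, ∫⁻ y, Z p (hcons ω y) ∂q t ω < ⊤ := fun p => by
    have h1 : ∫⁻ ω, Z p ω ∂Pmes q (t + 1) < ⊤ :=
      lintegral_Jv_lt_top hS h hF.max_zero (hGm p.2) (Nat.succ_pos p.1) (hψm p) (hψa p)
    rw [lintegral_succ q (hZm p)] at h1
    exact ae_lt_top ((hZm p).lintegral_kernel_prod_right' (κ := q t)) h1.ne
  filter_upwards [ae_all_iff.2 hZ, ae_ae_of_ae_succ q (ae_all_iff.2 hψ), ae_ae_of_ae_succ q hχ0,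
    ae_ae_of_ae_succ q hw0, hξ0', hbd] with ω hZω hψω hχω hwω hξω ⟨R, hR⟩
  obtain ⟨N, m, hm0, hm⟩ := exists_dominating_index
    (fun j => ((ξ j ω, g j ω) : ℝ × Evec d)) R
    (fun j => by rw [Prod.norm_def]; exact max_le (hR j).1 (hR j).2)
  obtain ⟨M, hM⟩ := exists_nat_ge (m * c N ω)
  refine ⟨fun y => Z (M, N) (hcons ω y), hZω (M, N), fun j => ?_⟩
  filter_upwards [hψω, hχω, hwω] with y h1 h2 h3
  have hle : χ j (hcons ω y) ≤ ((M + 1 : ℕ) : ℝ) * w N (hcons ω y) := by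
    have h4 := hm ((LinearMap.fst ℝ ℝ (Evec d)) +
      ((innerₛₗ ℝ (deltaS S t ω y)).comp (LinearMap.snd ℝ ℝ (Evec d)))) (fun j => by
        have := h2 j
        simp only [LinearMap.add_apply, LinearMap.fst_apply, LinearMap.comp_apply,
          LinearMap.snd_apply, innerₛₗ_apply_apply]
        rw [real_inner_comm]
        exact this) j
    simp only [LinearMap.add_apply, LinearMap.fst_apply, LinearMap.comp_apply,
      LinearMap.snd_apply, innerₛₗ_apply_apply] at h4
    simp only [real_inner_comm _ (deltaS S t ω y)] at h4
    obtain ⟨h5, h6⟩ := hcw (hcons ω y) hξω N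
    calc χ j (hcons ω y) ≤ m * ∑ i ∈ Finset.range N, χ i (hcons ω y) := h4
      _ ≤ m * (c N ω * w N (hcons ω y)) := by
          refine mul_le_mul_of_nonneg_left ?_ hm0
          rw [hcons_fst] at h6
          rw [h6]; linarith
      _ = (m * c N ω) * w N (hcons ω y) := by ring
      _ ≤ ((M + 1 : ℕ) : ℝ) * w N (hcons ω y) := by
          refine mul_le_mul_of_nonneg_right ?_ (h3 N)
          push_cast; linarith
  refine ePos_mono ((Jv_mono_payoff q S (fun ω x => le_max_left _ _) (φ j) n (t + 1) h
    (hcons ω y) _).trans (h1 (M, N) j hle))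

end Compactness

/-! ### Backward induction -/

section Induction

variable {q : ∀ t, Kernel (Hist Ωs t) (Ωs (t + 1))} [∀ t, IsMarkovKernel (q t)]
  {S : ∀ t, Hist Ωs t → Evec d} {T : ℕ}

/-- The backward induction step. After removing redundant parts the portfolios at time `t` are
bounded by (NA), so a random subsequence converges; the induction hypothesis provides the
continuation from the limit, and reverse Fatou passes to the limit in the one-step integral. -/
lemma closedAt_succ (hNA : NAcond q S T) (hS : ∀ t, Measurable (S t)) {n t : ℕ}
    (h : t + (n + 1) = T) (h' : t + 1 + n = T) (IH : ClosedAt q S T n (t + 1) h') :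
    ClosedAt q S T (n + 1) t h := by
  intro F hF ξ ξ' φ hξ hξ' hφ hlim hadm
  have ht : t < T := by omega
  have hfst := measurable_hist_fst (Ωs := Ωs) t
  have hΔ := measurable_deltaS S hS t
  -- remove the redundant part of the first portfolio
  choose g hgm hg using fun k => exists_projected_strategy (q := q) hS (hφ k t)
  have hgφ : ∀ k, ∀ᵐ ω ∂Pmes q (t + 1),
      ⟪g k ω.1, deltaS S t ω.1 ω.2⟫_ℝ = ⟪φ k t ω.1, deltaS S t ω.1 ω.2⟫_ℝ := fun k => by
    refine ae_succ_of_ae_ae q ?_ (Eventually.of_forall fun ω => (hg k ω).2)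
    exact measurableSet_eq_fun (((hgm k).comp hfst).inner hΔ) (((hφ k t).comp hfst).inner hΔ)
  have hgadm : ∀ k, Adm q S n (t + 1)
      (fun ω => ξ k ω.1 + ⟪g k ω.1, deltaS S t ω.1 ω.2⟫_ℝ) (φ k) := fun k => by
    refine Adm.mono (show Adm q S n (t + 1) _ (φ k) from hadm k) ?_
    filter_upwards [hgφ k] with ω hω
    rw [hω]
  have hξ0 : ∀ k, ∀ᵐ ω ∂Pmes q t, 0 ≤ ξ k ω := fun k =>
    Adm.nonneg hNA (hφ k) hS (hξ k) h (hadm k)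
  have hbξ : ∀ᵐ ω ∂Pmes q t, ∃ R : ℝ, ∀ k, |ξ k ω| ≤ R := by
    filter_upwards [hlim] with ω hω
    obtain ⟨R, hR⟩ := (hω.abs).bddAbove_range
    exact ⟨R, fun k => hR ⟨k, rfl⟩⟩
  have hbg : ∀ᵐ ω ∂Pmes q t, ∃ R : ℝ, ∀ k, ‖g k ω‖ ≤ R := by
    refine ae_bounded_strategies hNA ht (ξ := ξ) hgm ?_ (fun k ω => (hg k ω).1) fun k => ?_
    · filter_upwards [hbξ] with ω ⟨R, hR⟩
      exact ⟨R, fun k => (le_abs_self _).trans (hR k)⟩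
    · exact Adm.nonneg hNA (hφ k) hS (((hξ k).comp hfst).add (((hgm k).comp hfst).inner hΔ)) h'
        (hgadm k)
  -- random subsequence along which the values tend to their limsup and the portfolios converge
  have hzm : ∀ k, Measurable fun ω => Jv q S F (φ k) (n + 1) t h ω (ξ k ω) := fun k =>
    (measurable_Jv hS hF.uncurry (hφ k) (n + 1) t h).comp (measurable_id.prodMk (hξ k))
  obtain ⟨τ, w, hτ, hw, hmono, hzlim, hgw⟩ := exists_measurable_subseq hzm hgm
  choose σ hσm hσt hσ using fun j => exists_index_extension (hτ j)
  let ξτ : ℕ → Hist Ωs t → ℝ := fun j ω => ξ (τ j ω) ω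
  let gτ : ℕ → Hist Ωs t → Evec d := fun j ω => g (τ j ω) ω
  let φτ : ℕ → ∀ t, Hist Ωs t → Evec d := fun j s ω => φ (σ j s ω) s ω
  have hξτ : ∀ j, Measurable (ξτ j) := fun j => measurable_comp_index hξ (hτ j)
  have hgτ : ∀ j, Measurable (gτ j) := fun j => measurable_comp_index hgm (hτ j)
  have hφτ : ∀ j s, Measurable (φτ j s) := fun j s =>
    measurable_comp_index (fun k => hφ k s) (hσm j s)
  have hστ : ∀ j (ω : Hist Ωs (t + 1)), σ j (t + 1) ω = τ j ω.1 := fun j ω => by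
    rw [hσ j t le_rfl, hσt j]
  have hadmτ : ∀ j, Adm q S n (t + 1)
      (fun ω => ξτ j ω.1 + ⟪gτ j ω.1, deltaS S t ω.1 ω.2⟫_ℝ) (φτ j) := fun j => by
    have h1 := Adm.paste (σ := σ j) hgadm (fun s hs => hσ j s (by omega))
    simp only [hστ] at h1
    exact h1
  obtain ⟨ψ, hψm, hψa, hψ, hψD⟩ := IH F hF
    (fun j ω => ξτ j ω.1 + ⟪gτ j ω.1, deltaS S t ω.1 ω.2⟫_ℝ)
    (fun ω => ξ' ω.1 + ⟪w ω.1, deltaS S t ω.1 ω.2⟫_ℝ) φτ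
    (fun j => ((hξτ j).comp hfst).add (((hgτ j).comp hfst).inner hΔ))
    ((hξ'.comp hfst).add ((hw.comp hfst).inner hΔ)) hφτ
    (by
      filter_upwards [(ae_succ_fst_iff q).2 hlim, (ae_succ_fst_iff q).2 hbg] with ω h1 h2
      exact (h1.comp (hmono ω.1).tendsto_atTop).add ((hgw ω.1 h2).inner tendsto_const_nhds))
    hadmτ
  let Ψ : ∀ t, Hist Ωs t → Evec d := Function.update ψ t w
  have hΨt : Ψ t = w := Function.update_self _ _ _
  have hΨn : ∀ s, s ≠ t → Ψ s = ψ s := fun s hs => Function.update_of_ne hs _ _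
  have hdom := ae_exists_dominating hNA hS IH hF hξτ hgτ hφτ hadmτ
    (fun j => by filter_upwards [ae_all_iff.2 hξ0] with ω hω using hω _)
    (by
      filter_upwards [hbξ, hbg] with ω ⟨R, hR⟩ ⟨R', hR'⟩
      exact ⟨max R R', fun j => ⟨(hR _).trans (le_max_left _ _),
        (hR' _).trans (le_max_right _ _)⟩⟩)
  refine ⟨Ψ, fun s => ?_, ?_, ?_, fun s hs hsT => ?_⟩
  · by_cases hs : s = t
    · subst hs; rw [hΨt]; exact hw
    · rw [hΨn s hs]; exact hψm s
  · change Adm q S n (t + 1) (fun ω => ξ' ω.1 + ⟪Ψ t ω.1, deltaS S t ω.1 ω.2⟫_ℝ) Ψ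
    rw [hΨt]
    exact hψa.congr_strategy fun s hs => (hΨn s (by omega)).symm
  · filter_upwards [hdom, ae_ae_of_ae_succ q hψ] with ω ⟨Y, hY, hXY⟩ hψω
    let X : ℕ → Ωs (t + 1) → EReal := fun j y =>
      Jv q S F (φτ j) n (t + 1) h' (hcons ω y) (ξτ j ω + ⟪gτ j ω, deltaS S t ω y⟫_ℝ)
    have hωm : Measurable fun y : Ωs (t + 1) => hcons ω y :=
      (measurable_const.prodMk measurable_id : Measurable fun y : Ωs (t + 1) => (ω, y))
    have hXm : ∀ j, Measurable (X j) := fun j => by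
      refine (measurable_Jv hS hF.uncurry (hφτ j) n (t + 1) h').comp (hωm.prodMk ?_)
      exact measurable_const.add (measurable_const.inner (hΔ.comp hωm))
    have hzX : ∀ j, Jv q S F (φ (τ j ω)) (n + 1) t h ω (ξ (τ j ω) ω) = geint (q t ω) (X j) :=
      fun j => by
        refine geint_congr_ae ?_
        filter_upwards [(hg (τ j ω) ω).2] with y hy
        simp only [X, φτ, ξτ, gτ]
        rw [Jv_paste q S n (t + 1) h' (fun s hs => hσ j s (by omega)), hστ, hcons_fst, hy]
    have hlimeq : limsup (fun k => Jv q S F (φ k) (n + 1) t h ω (ξ k ω)) atTop =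
        limsup (fun j => geint (q t ω) (X j)) atTop := by
      rw [← (hzlim ω).limsup_eq]
      simp only [hzX]
    rw [hlimeq]
    refine (limsup_geint_le hXm Y hXY hY).trans (geint_mono_ae ?_)
    filter_upwards [hψω] with y hy
    rw [Jv_congr_strategy q S (φ := Ψ) (ψ := ψ) n (t + 1) h' (fun s hs => hΨn s (by omega)), hΨt]
    exact hy
  · by_cases hst : s = t
    · subst hst
      rw [hΨt]
      filter_upwards [ae_mem_Dset hNA hS ht, hbg] with ω hD hb
      refine hD _ ((Submodule.isClosed_orthogonal _).mem_of_tendsto (hgw ω hb)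
        (Eventually.of_forall fun j => (hg _ _).1))
    · rw [hΨn s hst]
      exact hψD s (by omega) hsT

lemma closedAt (hNA : NAcond q S T) (hS : ∀ t, Measurable (S t)) (n : ℕ) :
    ∀ (t : ℕ) (h : t + n = T), ClosedAt q S T n t h := by
  induction n with
  | zero => exact closedAt_zero
  | succ n ih => exact fun t h => closedAt_succ hNA hS h (by omega) (ih (t + 1) (by omega))

end Induction

/-! ### Existence of an optimal strategy -/

section Final

variable {q : ∀ t, Kernel (Hist Ωs t) (Ωs (t + 1))} [∀ t, IsMarkovKernel (q t)]
  {S : ∀ t, Hist Ωs t → Evec d} {T : ℕ}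

set_option linter.unusedSectionVars false

lemma Vval_smul (S : ∀ t, Hist Ωs t → Evec d) (φ : ∀ t, Hist Ωs t → Evec d) (c x x' : ℝ) :
    ∀ t ω, Vval S (fun s ω => c • φ s ω) x' t ω = x' + c * (Vval S φ x t ω - x)
  | 0, _ => by simp [Vval]
  | t + 1, ω => by
    change Vval S _ x' t ω.1 + ⟪c • φ t ω.1, deltaS S t ω.1 ω.2⟫_ℝ =
      x' + c * (Vval S φ x t ω.1 + ⟪φ t ω.1, deltaS S t ω.1 ω.2⟫_ℝ - x)
    rw [Vval_smul S φ c x x' t, real_inner_smul_left]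
    ring

lemma ePos_mul_add_le {c : ℝ} (hc : 0 ≤ c) (u : EReal) (b : ℝ) :
    ePos ((c : EReal) * (u + (b : EReal))) ≤ ENNReal.ofReal c * (ePos u + ENNReal.ofReal b) := by
  simp only [ePos_eq]
  rw [EReal.toENNReal_mul (by exact_mod_cast hc), EReal.toENNReal_of_ne_top (EReal.coe_ne_top c),
    EReal.toReal_coe]
  gcongr
  refine EReal.toENNReal_add_le.trans ?_
  rw [EReal.toENNReal_of_ne_top (EReal.coe_ne_top b), EReal.toReal_coe]

lemma geint_dirac {α : Type*} [MeasurableSpace α] (a : α) {f : α → EReal} (hf : Measurable f) :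
    geint (Measure.dirac a) f = f a := by
  unfold geint
  have h1 : ∫⁻ b, ePos (f b) ∂Measure.dirac a = ePos (f a) :=
    lintegral_dirac' a (measurable_ePos.comp hf)
  have h2 : ∫⁻ b, ePos (-(f b)) ∂Measure.dirac a = ePos (-(f a)) :=
    lintegral_dirac' a (measurable_ePos.comp hf.neg)
  rw [h1, h2]
  exact ePos_sub_ePos_neg (f a)

/-- Asymptotic elasticity upgrades the integrability of the utility at initial capital `1` to
all multiples of the terminal wealth. -/
lemma payoff_utility (hS : ∀ t, Measurable (S t)) {U : Hist Ωs T → ℝ → EReal}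
    (hUmeas : ∀ x : ℝ, Measurable fun ω => U ω x) (hUmono : ∀ ω, Monotone (U ω))
    (hUusc : ∀ ω, UpperSemicontinuous (U ω)) {γ K : ℝ} (hK : 0 < K)
    {C : Hist Ωs T → ℝ} (hCmeas : Measurable C)
    (hCint : ∫⁻ ω, ENNReal.ofReal (C ω) ∂(Pmes q T) < ⊤)
    (hAE : ∀ ω, ∀ lam x : ℝ, 1 ≤ lam →
      U ω (lam * x) ≤ ((K * lam ^ γ : ℝ) : EReal) * (U ω (x + 1 / 2) + (C ω : EReal)))
    (A1 : ∀ φ ∈ PhiU q S T U 1, ∫⁻ ω, ePos (U ω (Vval S φ 1 T ω)) ∂(Pmes q T) < ⊤)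
    (A2 : PhiU q S T U 1 = PhiX q S T 1) : Payoff q S T U where
  meas := hUmeas
  mono := hUmono
  usc := hUusc
  int m hm φ hφ := by
    have hm1 : (1 : ℝ) ≤ m := by exact_mod_cast hm
    have hV : ∀ ω, Vval S (fun s ω => (1 / 2 : ℝ) • φ s ω) 1 T ω =
        Vval S φ 1 T ω / 2 + 1 / 2 := fun ω => by
      rw [Vval_smul S φ (1 / 2) 1 1]; ring
    have hmem : (fun s ω => (1 / 2 : ℝ) • φ s ω) ∈ PhiX q S T 1 := by
      refine ⟨fun s => (hφ.1 s).const_smul (1 / 2 : ℝ), ?_⟩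
      filter_upwards [hφ.2] with ω hω
      rw [hV]; linarith
    have hfin := A1 _ (A2 ▸ hmem)
    have hc : 0 ≤ K * (2 * m : ℝ) ^ γ := by positivity
    have hUm := (measurable_uncurry_payoff hUmeas hUmono hUusc).comp
      (measurable_id.prodMk (measurable_Vval hS hmem.1 1 T))
    calc ∫⁻ ω, ePos (U ω (m * Vval S φ 1 T ω)) ∂Pmes q T
        ≤ ∫⁻ ω, ENNReal.ofReal (K * (2 * m : ℝ) ^ γ) *
          (ePos (U ω (Vval S (fun s ω => (1 / 2 : ℝ) • φ s ω) 1 T ω)) +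
            ENNReal.ofReal (C ω)) ∂Pmes q T := by
          refine lintegral_mono fun ω => ?_
          refine le_trans ?_ (ePos_mul_add_le hc _ _)
          refine ePos_mono ?_
          have := hAE ω (2 * m) (Vval S φ 1 T ω / 2) (by linarith)
          rw [hV]
          convert this using 2
          ring
      _ = ENNReal.ofReal (K * (2 * m : ℝ) ^ γ) *
          (∫⁻ ω, ePos (U ω (Vval S (fun s ω => (1 / 2 : ℝ) • φ s ω) 1 T ω)) ∂Pmes q T +
            ∫⁻ ω, ENNReal.ofReal (C ω) ∂Pmes q T) := by
          rw [lintegral_const_mul' _ _ ENNReal.ofReal_ne_top,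
            lintegral_add_right _ hCmeas.ennreal_ofReal]
      _ < ⊤ := ENNReal.mul_lt_top ENNReal.ofReal_lt_top (ENNReal.add_lt_top.2 ⟨hfin, hCint⟩)

lemma Payoff.lintegral_lt_top {F : Hist Ωs T → ℝ → EReal} (hF : Payoff q S T F) {x : ℝ}
    {φ : ∀ t, Hist Ωs t → Evec d} (hφ : φ ∈ PhiX q S T x) :
    ∫⁻ ω, ePos (F ω (Vval S φ x T ω)) ∂Pmes q T < ⊤ := by
  obtain ⟨m, hm⟩ := exists_nat_gt (max x 0)
  have hmx : x < m := (le_max_left _ _).trans_lt hm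
  have hm0 : (0 : ℝ) < m := (le_max_right _ _).trans_lt hm
  have hV : ∀ ω, (m : ℝ) * Vval S (fun s ω => (m : ℝ)⁻¹ • φ s ω) 1 T ω =
      Vval S φ x T ω + (m - x) := fun ω => by
    rw [Vval_smul S φ (m : ℝ)⁻¹ x 1]
    field_simp
    ring
  have hmem : (fun s ω => (m : ℝ)⁻¹ • φ s ω) ∈ PhiX q S T 1 := by
    refine ⟨fun s => (hφ.1 s).const_smul (m : ℝ)⁻¹, ?_⟩
    filter_upwards [hφ.2] with ω hω
    refine nonneg_of_mul_nonneg_right (a := (m : ℝ)) ?_ hm0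
    rw [hV]; linarith
  refine lt_of_le_of_lt (lintegral_mono fun ω => ?_) (hF.int m (by exact_mod_cast hm0) _ hmem)
  refine ePos_mono (hF.mono ω ?_)
  rw [hV]; linarith

/-- Existence of an optimal strategy for a general payoff. -/
lemma Payoff.exists_optimal (hNA : NAcond q S T) (hS : ∀ t, Measurable (S t))
    {F : Hist Ωs T → ℝ → EReal} (hF : Payoff q S T F) {x : ℝ} (hx : 0 ≤ x) :
    uval q S T F x < ⊤ ∧ ∃ φ ∈ PhiU q S T F x,
      uval q S T F x = geint (Pmes q T) (fun ω => F ω (Vval S φ x T ω)) ∧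
      ∀ t, t < T → ∀ᵐ ω ∂(Pmes q t), φ t ω ∈ Dset q S t ω := by
  have hX : ∀ φ ∈ PhiX q S T x, φ ∈ PhiU q S T F x := fun φ hφ =>
    ⟨hφ, Or.inl (hF.lintegral_lt_top hφ)⟩
  let v : (∀ t, Hist Ωs t → Evec d) → EReal := fun φ =>
    geint (Pmes q T) fun ω => F ω (Vval S φ x T ω)
  have h0 : (fun _ _ => 0 : ∀ t, Hist Ωs t → Evec d) ∈ PhiX q S T x := by
    refine ⟨fun _ => measurable_const, Filter.Eventually.of_forall fun ω => ?_⟩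
    rw [Vval_eq_const S x T (fun _ _ _ => rfl)]
    exact hx
  have huv : uval q S T F x = sSup (v '' PhiU q S T F x) := sSup_image.symm
  obtain ⟨u, -, hu, hmem⟩ := exists_seq_tendsto_sSup (S := v '' PhiU q S T F x)
    ⟨_, _, hX _ h0, rfl⟩ (OrderTop.bddAbove _)
  choose φ hφ hφu using hmem
  obtain ⟨ψ, hψm, hψa, hψ, hψD⟩ := closedAt hNA hS T 0 (by omega) F hF (fun _ _ => x)
    (fun _ => x) φ (fun _ => measurable_const) measurable_const (fun k => (hφ k).1.1)
    (Filter.Eventually.of_forall fun _ => tendsto_const_nhds)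
    (fun k => (adm_Vval_iff (by omega)).2 (hφ k).1.2)
  have hψX : ψ ∈ PhiX q S T x := ⟨hψm, (adm_Vval_iff (by omega)).1 hψa⟩
  have hval : ∀ θ ∈ PhiX q S T x,
      v θ = Jv q S F θ T 0 (by omega) (show Hist Ωs 0 from PUnit.unit) x := fun θ hθ => by
    refine (geint_Jv hS hF.uncurry hθ.1 x (hF.lintegral_lt_top hθ) T 0 (by omega)).trans ?_
    exact geint_dirac (α := Hist Ωs 0) PUnit.unit
      ((measurable_Jv hS hF.uncurry hθ.1 T 0 (by omega)).comp
        (measurable_id.prodMk measurable_const))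
  have hle : uval q S T F x ≤ v ψ := by
    obtain ⟨ω, hω⟩ := hψ.exists
    have hu' : u = fun k => Jv q S F (φ k) T 0 (by omega) (show Hist Ωs 0 from PUnit.unit) x :=
      funext fun k => by rw [← hφu k]; exact hval _ (hφ k).1
    rw [huv, ← hu.limsup_eq, hval ψ hψX, hu']
    exact hω
  have heq : uval q S T F x = v ψ := le_antisymm hle
    (le_iSup₂_of_le (f := fun φ (_ : φ ∈ PhiU q S T F x) => v φ) ψ (hX ψ hψX) le_rfl)
  refine ⟨?_, ψ, hX ψ hψX, heq, fun t ht => hψD t (Nat.zero_le t) ht⟩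
  rw [heq, lt_top_iff_ne_top]
  intro htop
  have h1 := (ePos_geint_le (μ := Pmes q T) fun ω => F ω (Vval S ψ x T ω)).trans_lt
    (hF.lintegral_lt_top hψX)
  rw [show geint (Pmes q T) (fun ω => F ω (Vval S ψ x T ω)) = ⊤ from htop] at h1
  simp [ePos] at h1

end Final

end Proof

/-- **main theorem.** Under (NA), (A1), (A2) and asymptotic elasticity:
for every `x ≥ 0`, `u(x) < ∞` and there is an optimal `φ* ∈ Φ(U,x)` attaining `u(x)`;
moreover `φ*_{t+1}(·) ∈ D^{t+1}(·)` `P_t`-a.s. for all `0 ≤ t ≤ T−1`. -/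
theorem exists_optimal_strategy
    (q : ∀ t, Kernel (Hist Ωs t) (Ωs (t + 1))) [∀ t, IsMarkovKernel (q t)]
    (S : ∀ t, Hist Ωs t → Evec d) (hS : ∀ t, Measurable (S t)) (T : ℕ)
    (hNA : NAcond q S T)
    (U : Hist Ωs T → ℝ → EReal)
    (hUmeas : ∀ x : ℝ, Measurable fun ω => U ω x)
    (hUmono : ∀ ω, Monotone (U ω))
    (hUusc : ∀ ω, UpperSemicontinuous (U ω))
    (hUneg : ∀ ω, ∀ x : ℝ, x < 0 → U ω x = ⊥)
    (γ K : ℝ) (hγ : 0 ≤ γ) (hK : 0 < K)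
    (C : Hist Ωs T → ℝ) (hCmeas : Measurable C) (hC0 : ∀ ω, 0 ≤ C ω)
    (hCint : ∫⁻ ω, ENNReal.ofReal (C ω) ∂(Pmes q T) < ⊤)
    (hAE : ∀ ω, ∀ lam x : ℝ, 1 ≤ lam →
      U ω (lam * x) ≤ ((K * lam ^ γ : ℝ) : EReal) * (U ω (x + 1 / 2) + (C ω : EReal)))
    (A1 : ∀ φ ∈ PhiU q S T U 1,
      ∫⁻ ω, ePos (U ω (Vval S φ 1 T ω)) ∂(Pmes q T) < ⊤)
    (A2 : PhiU q S T U 1 = PhiX q S T 1) :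
    ∀ x : ℝ, 0 ≤ x →
      uval q S T U x < ⊤ ∧
      ∃ φ ∈ PhiU q S T U x,
        uval q S T U x = geint (Pmes q T) (fun ω => U ω (Vval S φ x T ω)) ∧
        ∀ t, t < T → ∀ᵐ ω ∂(Pmes q t), φ t ω ∈ Dset q S t ω := by
  intro x hx
  exact (payoff_utility hS hUmeas hUmono hUusc hK hCmeas hCint hAE A1 A2).exists_optimal hNA hS hx
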